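/- (Theorem 28) Let 0 < θ₀ < θ₁ < 1, 0 < θ < 1, 0 < r, r₀, r₁, q₀, q₁ ≤ ∞, a, a₀, a₁, b₀, b₁ ∈ SV, ‖s^{-1/r₀} b₀(s)/a₀(s)‖_{r₀,(0,1)} < ∞, and ‖s^{-1/r₁} b₁(s)/a₁(s)‖_{r₁,(1,∞)} < ∞. Put c₀(t) = a₀(t) ‖s^{-1/r₀} b₀(s)/a₀(s)‖_{r₀,(0,t)}, c₁(t) = a₁(t) ‖s^{-1/r₁} b₁(s)/a₁(s)‖_{r₁,(t,∞)}, and ρ(t) = t^{θ₁-θ₀} c₀(t)/c₁(t). Then (Ā^𝓡_{θ₀,r₀,b₀,q₀,a₀}, Ā^𝓛_{θ₁,r₁,b₁,q₁,a₁})_{θ,r;a} ≅ Ā_{η,r;a^#}, where η = (1-θ)θ₀ + θθ₁ and a^#(t) = c₀(t)^{1-θ} c₁(t)^θ a(ρ(t)). -/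

import Mathlib

open MeasureTheory Set ENNReal Filter

noncomputable section

/-- The `L_q` quasi-norm (with respect to Lebesgue measure) of an `ℝ≥0∞`-valued
function over a set of reals; for `q = ∞` it is the essential supremum. -/
def LqNorm (q : ℝ≥0∞) (s : Set ℝ) (g : ℝ → ℝ≥0∞) : ℝ≥0∞ :=
  if q = ∞ then essSup g (volume.restrict s)
  else (∫⁻ t in s, g t ^ q.toReal) ^ q⁻¹.toReal

/-- The weight `s ↦ s ^ (-1/r) * b s`, as an `ℝ≥0∞`-valued function
(`1/∞ = 0` by convention). -/
def svWgt (r : ℝ≥0∞) (b : ℝ → ℝ) : ℝ → ℝ≥0∞ :=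
  fun s => ENNReal.ofReal (s ^ (-(r⁻¹.toReal)) * b s)

/-- `f` and `g` are equivalent on `s`: each is bounded by a constant multiple
of the other there. -/
def EquivOn (s : Set ℝ) (f g : ℝ → ℝ) : Prop :=
  ∃ C : ℝ, 0 < C ∧ ∀ t ∈ s, C⁻¹ * g t ≤ f t ∧ f t ≤ C * g t

/-- A positive measurable function `b` on `(0,∞)` is slowly varying if for every
`ε > 0`, `t ^ ε * b t` is equivalent to a non-decreasing function and
`t ^ (-ε) * b t` is equivalent to a non-increasing function. -/
def SlowlyVarying (b : ℝ → ℝ) : Prop :=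
  AEMeasurable b (volume.restrict (Ioi 0)) ∧ (∀ t ∈ Ioi (0:ℝ), 0 < b t) ∧
    ∀ ε : ℝ, 0 < ε →
      (∃ g : ℝ → ℝ, MonotoneOn g (Ioi 0) ∧ EquivOn (Ioi 0) (fun t => t ^ ε * b t) g) ∧
      (∃ g : ℝ → ℝ, AntitoneOn g (Ioi 0) ∧ EquivOn (Ioi 0) (fun t => t ^ (-ε) * b t) g)

/-- A quasi-Banach space continuously embedded into the ambient (Hausdorff) space `E`,
recorded via its extended-real-valued quasi-norm; the space itself is the set of
vectors of finite quasi-norm. -/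
structure QuasiBanach (E : Type*) [AddCommGroup E] [Module ℝ E] where
  N : E → ℝ≥0∞
  zero : N 0 = 0
  definite : ∀ x, N x = 0 → x = 0
  smul : ∀ (c : ℝ) (x : E), N (c • x) = ENNReal.ofReal |c| * N x
  quasi : ∃ C : ℝ≥0∞, 1 ≤ C ∧ C ≠ ∞ ∧ ∀ x y, N (x + y) ≤ C * (N x + N y)
  complete : ∀ f : ℕ → E,
    (∀ ε : ℝ≥0∞, 0 < ε → ∃ M : ℕ, ∀ m ≥ M, ∀ n ≥ M, N (f m - f n) < ε) →
    (∀ n, N (f n) ≠ ∞) →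
    ∃ g : E, N g ≠ ∞ ∧ Tendsto (fun n => N (f n - g)) atTop (nhds 0)

variable {E : Type*} [AddCommGroup E] [Module ℝ E]

/-- The Peetre K-functional of the couple whose quasi-norms are `N₀`, `N₁`. -/
def Kf (N₀ N₁ : E → ℝ≥0∞) (t : ℝ) (f : E) : ℝ≥0∞ :=
  ⨅ g : E, N₀ g + ENNReal.ofReal t * N₁ (f - g)

/-- The quasi-norm of the real interpolation space `Ā_{θ,q;b}`. -/
def normK (N₀ N₁ : E → ℝ≥0∞) (θ : ℝ) (q : ℝ≥0∞) (b : ℝ → ℝ) (f : E) : ℝ≥0∞ :=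
  LqNorm q (Ioi 0) fun u =>
    ENNReal.ofReal (u ^ (-θ - q⁻¹.toReal) * b u) * Kf N₀ N₁ u f

/-- The quasi-norm of the limiting interpolation space `Ā^𝓛_{σ,r,b,q,a}`. -/
def normL (N₀ N₁ : E → ℝ≥0∞) (σ : ℝ) (r q : ℝ≥0∞) (b a : ℝ → ℝ) (f : E) : ℝ≥0∞ :=
  LqNorm r (Ioi 0) fun t =>
    ENNReal.ofReal (t ^ (-(r⁻¹.toReal)) * (b t / a t)) *
      LqNorm q (Ioo 0 t) fun u =>
        ENNReal.ofReal (u ^ (-σ - q⁻¹.toReal) * a u) * Kf N₀ N₁ u f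

/-- The quasi-norm of the limiting interpolation space `Ā^𝓡_{σ,r,b,q,a}`. -/
def normR (N₀ N₁ : E → ℝ≥0∞) (σ : ℝ) (r q : ℝ≥0∞) (b a : ℝ → ℝ) (f : E) : ℝ≥0∞ :=
  LqNorm r (Ioi 0) fun t =>
    ENNReal.ofReal (t ^ (-(r⁻¹.toReal)) * (b t / a t)) *
      LqNorm q (Ioi t) fun u =>
        ENNReal.ofReal (u ^ (-σ - q⁻¹.toReal) * a u) * Kf N₀ N₁ u f

/-- Two (extended-real-valued) quasi-norms define the same space with
equivalent quasi-norms. -/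
def EquivNorms (nX nY : E → ℝ≥0∞) : Prop :=
  ∃ C : ℝ≥0∞, 0 < C ∧ C ≠ ∞ ∧ ∀ f : E, C⁻¹ * nY f ≤ nX f ∧ nX f ≤ C * nY f


/-! ### Real-variable preliminaries -/

/-- Pointwise form of slow variation. -/
def SVL (b : ℝ → ℝ) : Prop :=
  (∀ t, 0 < t → 0 < b t) ∧ ∀ ε : ℝ, 0 < ε → ∃ C : ℝ, 0 < C ∧ ∀ x y, 0 < x → x ≤ y →
    b y ≤ C * (y / x) ^ ε * b x ∧ b x ≤ C * (y / x) ^ ε * b y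

lemma SlowlyVarying.svl {b : ℝ → ℝ} (h : SlowlyVarying b) : SVL b := by
  obtain ⟨-, hpos, h⟩ := h
  refine ⟨fun t ht => hpos t ht, fun ε hε => ?_⟩
  obtain ⟨⟨g, hg, C, hC, hgC⟩, ⟨k, hk, D, hD, hkD⟩⟩ := h ε hε
  refine ⟨C * C + D * D, by positivity, fun x y hx hxy => ?_⟩
  have hy : 0 < y := hx.trans_le hxy
  have h1 := hgC x hx
  have h2 := hgC y hy
  have h3 := hg (mem_Ioi.2 hx) (mem_Ioi.2 hy) hxy
  have k1 := hkD x hx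
  have k2 := hkD y hy
  have k3 := hk (mem_Ioi.2 hx) (mem_Ioi.2 hy) hxy
  have hbx := hpos x hx
  have hby := hpos y hy
  have hxe : 0 < x ^ ε := Real.rpow_pos_of_pos hx ε
  have hye : 0 < y ^ ε := Real.rpow_pos_of_pos hy ε
  simp only [Real.rpow_neg hx.le, Real.rpow_neg hy.le] at h1 h2 k1 k2
  rw [Real.div_rpow hy.le hx.le]
  have e1 : C⁻¹ * g y ≤ y ^ ε * b y := h2.1
  have e1' : g y ≤ C * (y ^ ε * b y) := by
    rwa [inv_mul_le_iff₀ hC] at e1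
  have e2 : (y ^ ε)⁻¹ * b y ≤ D * (D * ((x ^ ε)⁻¹ * b x)) := by
    have := k1.1
    rw [inv_mul_le_iff₀ hD] at this
    exact k2.2.trans (mul_le_mul_of_nonneg_left (k3.trans this) hD.le)
  have e3 : x ^ ε * b x ≤ C * (C * (y ^ ε * b y)) :=
    h1.2.trans (mul_le_mul_of_nonneg_left (h3.trans e1') hC.le)
  constructor
  · have : b y ≤ D * D * (y ^ ε / x ^ ε) * b x := by
      have := mul_le_mul_of_nonneg_left e2 hye.le
      calc b y = y ^ ε * ((y ^ ε)⁻¹ * b y) := by field_simp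
        _ ≤ _ := this
        _ = _ := by field_simp
    refine this.trans ?_
    gcongr
    nlinarith
  · have : b x ≤ C * C * (y ^ ε / x ^ ε) * b y := by
      have := mul_le_mul_of_nonneg_left e3 (inv_pos.2 hxe).le
      calc b x = (x ^ ε)⁻¹ * (x ^ ε * b x) := by field_simp
        _ ≤ _ := this
        _ = _ := by field_simp
    refine this.trans ?_
    gcongr
    nlinarith

lemma SVL.mul {f g : ℝ → ℝ} (hf : SVL f) (hg : SVL g) : SVL (fun t => f t * g t) := by
  refine ⟨fun t ht => mul_pos (hf.1 t ht) (hg.1 t ht), fun ε hε => ?_⟩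
  obtain ⟨C, hC, h1⟩ := hf.2 (ε / 2) (by positivity)
  obtain ⟨D, hD, h2⟩ := hg.2 (ε / 2) (by positivity)
  refine ⟨C * D, by positivity, fun x y hx hxy => ?_⟩
  have hy : 0 < y := hx.trans_le hxy
  have e : (y / x) ^ ε = (y / x) ^ (ε / 2) * (y / x) ^ (ε / 2) := by
    rw [← Real.rpow_add (by positivity)]; ring_nf
  have p : 0 < (y / x) ^ (ε / 2) := by positivity
  have := hf.1 x hx; have := hf.1 y hy; have := hg.1 x hx; have := hg.1 y hy
  rw [e]
  constructor
  · calc f y * g y ≤ (C * (y / x) ^ (ε / 2) * f x) * (D * (y / x) ^ (ε / 2) * g x) := by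
          gcongr
          exacts [(h1 x y hx hxy).1, (h2 x y hx hxy).1]
      _ = _ := by ring
  · calc f x * g x ≤ (C * (y / x) ^ (ε / 2) * f y) * (D * (y / x) ^ (ε / 2) * g y) := by
          gcongr
          exacts [(h1 x y hx hxy).2, (h2 x y hx hxy).2]
      _ = _ := by ring

lemma SVL.inv {f : ℝ → ℝ} (hf : SVL f) : SVL (fun t => (f t)⁻¹) := by
  refine ⟨fun t ht => inv_pos.2 (hf.1 t ht), fun ε hε => ?_⟩
  obtain ⟨C, hC, h1⟩ := hf.2 ε hε
  refine ⟨C, hC, fun x y hx hxy => ?_⟩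
  have hy : 0 < y := hx.trans_le hxy
  have h2 := hf.1 x hx; have h3 := hf.1 y hy
  obtain ⟨h4, h5⟩ := h1 x y hx hxy
  constructor
  · rw [inv_le_iff_one_le_mul₀ h3]
    calc 1 = f x * (f x)⁻¹ := by field_simp
      _ ≤ (C * (y / x) ^ ε * f y) * (f x)⁻¹ := by gcongr
      _ = _ := by ring
  · rw [inv_le_iff_one_le_mul₀ h2]
    calc 1 = f y * (f y)⁻¹ := by field_simp
      _ ≤ (C * (y / x) ^ ε * f x) * (f y)⁻¹ := by gcongr
      _ = _ := by ring

lemma SVL.div {f g : ℝ → ℝ} (hf : SVL f) (hg : SVL g) : SVL (fun t => f t / g t) := by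
  simpa only [div_eq_mul_inv] using hf.mul hg.inv

lemma SVL.rpow {f : ℝ → ℝ} (hf : SVL f) {c : ℝ} (hc : 0 < c) : SVL (fun t => f t ^ c) := by
  refine ⟨fun t ht => Real.rpow_pos_of_pos (hf.1 t ht) _, fun ε hε => ?_⟩
  obtain ⟨C, hC, h1⟩ := hf.2 (ε / c) (by positivity)
  refine ⟨C ^ c, by positivity, fun x y hx hxy => ?_⟩
  have hy : 0 < y := hx.trans_le hxy
  have h2 := hf.1 x hx; have h3 := hf.1 y hy
  have e : (y / x) ^ ε = ((y / x) ^ (ε / c)) ^ c := by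
    rw [← Real.rpow_mul (by positivity)]; congr 1; field_simp
  rw [e]
  constructor
  · rw [← Real.mul_rpow (by positivity) (by positivity), ← Real.mul_rpow (by positivity) h2.le]
    exact Real.rpow_le_rpow h3.le (h1 x y hx hxy).1 hc.le
  · rw [← Real.mul_rpow (by positivity) (by positivity), ← Real.mul_rpow (by positivity) h3.le]
    exact Real.rpow_le_rpow h2.le (h1 x y hx hxy).2 hc.le

/-- Power-like functions with positive exponents. -/
def PL (α β : ℝ) (ρ : ℝ → ℝ) : Prop :=
  (∀ t, 0 < t → 0 < ρ t) ∧ ∃ C : ℝ, 1 ≤ C ∧ ∀ x y, 0 < x → x ≤ y →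
    ρ y ≤ C * (y / x) ^ β * ρ x ∧ (y / x) ^ α * ρ x ≤ C * ρ y

lemma SVL.pl {f : ℝ → ℝ} (hf : SVL f) (γ : ℝ) {ε : ℝ} (hε : 0 < ε) :
    PL (γ - ε) (γ + ε) (fun t => t ^ γ * f t) := by
  refine ⟨fun t ht => mul_pos (Real.rpow_pos_of_pos ht _) (hf.1 t ht), ?_⟩
  obtain ⟨C, hC, h1⟩ := hf.2 ε hε
  refine ⟨C + 1, by linarith, fun x y hx hxy => ?_⟩
  have hy : 0 < y := hx.trans_le hxy
  have h2 := hf.1 x hx; have h3 := hf.1 y hy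
  have hyx : 0 < y / x := by positivity
  obtain ⟨h4, h5⟩ := h1 x y hx hxy
  have ey : y ^ γ = (y / x) ^ γ * x ^ γ := by
    rw [← Real.mul_rpow hyx.le hx.le]; congr 1; field_simp
  have p1 : 0 < (y / x) ^ γ := by positivity
  have p2 : 0 < (y / x) ^ ε := by positivity
  have p3 : 0 < x ^ γ := by positivity
  simp only [ey]
  rw [Real.rpow_add hyx, Real.rpow_sub hyx]
  constructor
  · calc (y / x) ^ γ * x ^ γ * f y ≤ (y / x) ^ γ * x ^ γ * ((C + 1) * (y / x) ^ ε * f x) := by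
          gcongr
          exact h4.trans (by gcongr; linarith)
      _ = _ := by ring
  · calc (y / x) ^ γ / (y / x) ^ ε * (x ^ γ * f x)
        ≤ (y / x) ^ γ / (y / x) ^ ε * (x ^ γ * ((C + 1) * (y / x) ^ ε * f y)) := by
          gcongr
          exact h5.trans (by gcongr; linarith)
      _ = _ := by field_simp

lemma SVL.comp_pl {f ρ : ℝ → ℝ} {α β : ℝ} (hf : SVL f) (hρ : PL α β ρ) (hα : 0 < α) (hβ : 0 < β) :
    SVL (fun t => f (ρ t)) := by
  obtain ⟨hpos, D, hD, hρ⟩ := hρ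
  refine ⟨fun t ht => hf.1 _ (hpos t ht), fun ε hε => ?_⟩
  obtain ⟨C, hC, h1⟩ := hf.2 (ε / β) (by positivity)
  have hD0 : 0 < D := by linarith
  refine ⟨C * D ^ (ε / β), by positivity, fun x y hx hxy => ?_⟩
  have hy : 0 < y := hx.trans_le hxy
  have px := hpos x hx; have py := hpos y hy
  obtain ⟨h2, h3⟩ := hρ x y hx hxy
  have h1y : 1 ≤ y / x := by rwa [one_le_div hx]
  have fx := hf.1 _ px; have fy := hf.1 _ py
  have key : D ^ (ε / β) * (y / x) ^ ε = (D * (y / x) ^ β) ^ (ε / β) := by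
    rw [Real.mul_rpow hD0.le (by positivity), ← Real.rpow_mul (by positivity)]
    congr 2; field_simp
  have b1 : ρ y / ρ x ≤ D * (y / x) ^ β := by rwa [div_le_iff₀ px]
  have b2 : ρ x / ρ y ≤ D * (y / x) ^ β := by
    rw [div_le_iff₀ py]
    have : ρ x ≤ D * ρ y := by
      refine le_trans ?_ h3
      exact le_mul_of_one_le_left px.le (Real.one_le_rpow h1y hα.le)
    refine this.trans ?_
    have : 1 ≤ (y / x) ^ β := Real.one_le_rpow h1y hβ.le
    have : D * 1 ≤ D * (y / x) ^ β := by gcongr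
    nlinarith
  rw [mul_assoc C, key]
  rcases le_total (ρ x) (ρ y) with h | h
  · obtain ⟨h4, h5⟩ := h1 _ _ px h
    exact ⟨h4.trans (by gcongr), h5.trans (by gcongr)⟩
  · obtain ⟨h4, h5⟩ := h1 _ _ py h
    exact ⟨h5.trans (by gcongr), h4.trans (by gcongr)⟩

/-! ### Lemmas on `LqNorm` -/

lemma LqNorm_top (s : Set ℝ) (f : ℝ → ℝ≥0∞) : LqNorm ∞ s f = essSup f (volume.restrict s) := by
  simp [LqNorm]

lemma LqNorm_of_ne_top {q : ℝ≥0∞} (hq : q ≠ ∞) (s : Set ℝ) (f : ℝ → ℝ≥0∞) :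
    LqNorm q s f = (∫⁻ t in s, f t ^ q.toReal) ^ q⁻¹.toReal := by
  simp [LqNorm, hq]

lemma LqNorm_mono {q : ℝ≥0∞} {s : Set ℝ} (hs : MeasurableSet s) {f g : ℝ → ℝ≥0∞}
    (h : ∀ x ∈ s, f x ≤ g x) : LqNorm q s f ≤ LqNorm q s g := by
  by_cases hq : q = ∞
  · subst hq
    rw [LqNorm_top, LqNorm_top]
    exact essSup_mono_ae ((ae_restrict_iff' hs).2 (Eventually.of_forall h))
  · rw [LqNorm_of_ne_top hq, LqNorm_of_ne_top hq]
    gcongr ?_ ^ _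
    exact setLIntegral_mono' hs fun x hx => by gcongr; exact h x hx

lemma LqNorm_congr {q : ℝ≥0∞} {s : Set ℝ} (hs : MeasurableSet s) {f g : ℝ → ℝ≥0∞}
    (h : ∀ x ∈ s, f x = g x) : LqNorm q s f = LqNorm q s g :=
  le_antisymm (LqNorm_mono hs fun x hx => (h x hx).le) (LqNorm_mono hs fun x hx => (h x hx).ge)

lemma LqNorm_mono_set {q : ℝ≥0∞} {s t : Set ℝ} (hst : s ⊆ t) (f : ℝ → ℝ≥0∞) :
    LqNorm q s f ≤ LqNorm q t f := by
  by_cases hq : q = ∞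
  · subst hq
    rw [LqNorm_top, LqNorm_top]
    exact essSup_mono_measure (Measure.restrict_mono hst le_rfl).absolutelyContinuous
  · rw [LqNorm_of_ne_top hq, LqNorm_of_ne_top hq]
    gcongr ?_ ^ _
    exact lintegral_mono_set hst

lemma toReal_inv_pos {q : ℝ≥0∞} (hq0 : 0 < q) (hq : q ≠ ∞) : 0 < q.toReal ∧ 0 < q⁻¹.toReal ∧
    q.toReal * q⁻¹.toReal = 1 := by
  have : 0 < q.toReal := ENNReal.toReal_pos hq0.ne' hq
  refine ⟨this, by rw [ENNReal.toReal_inv]; positivity, ?_⟩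
  rw [ENNReal.toReal_inv]; field_simp

lemma le_LqNorm_const_mul {q : ℝ≥0∞} (hq0 : 0 < q) (s : Set ℝ) (c : ℝ≥0∞) (f : ℝ → ℝ≥0∞) :
    c * LqNorm q s f ≤ LqNorm q s (fun x => c * f x) := by
  by_cases hq : q = ∞
  · subst hq
    rw [LqNorm_top, LqNorm_top, ← ENNReal.essSup_const_mul]
  · rw [LqNorm_of_ne_top hq, LqNorm_of_ne_top hq]
    obtain ⟨h1, h2, h3⟩ := toReal_inv_pos hq0 hq
    calc c * (∫⁻ t in s, f t ^ q.toReal) ^ q⁻¹.toReal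
        = (c ^ q.toReal * ∫⁻ t in s, f t ^ q.toReal) ^ q⁻¹.toReal := by
          rw [ENNReal.mul_rpow_of_nonneg _ _ h2.le, ← ENNReal.rpow_mul, h3, ENNReal.rpow_one]
      _ ≤ _ := by
          gcongr ?_ ^ _
          refine (lintegral_const_mul_le _ _).trans (le_of_eq ?_)
          simp_rw [ENNReal.mul_rpow_of_nonneg _ _ h1.le]

lemma LqNorm_const_mul {q : ℝ≥0∞} (hq0 : 0 < q) (s : Set ℝ) {c : ℝ≥0∞} (hc : c ≠ ∞)
    (f : ℝ → ℝ≥0∞) :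
    LqNorm q s (fun x => c * f x) = c * LqNorm q s f := by
  by_cases hq : q = ∞
  · subst hq
    rw [LqNorm_top, LqNorm_top, ← ENNReal.essSup_const_mul]
  · rw [LqNorm_of_ne_top hq, LqNorm_of_ne_top hq]
    obtain ⟨h1, h2, h3⟩ := toReal_inv_pos hq0 hq
    simp_rw [ENNReal.mul_rpow_of_nonneg _ _ h1.le]
    rw [lintegral_const_mul' _ _ (ENNReal.rpow_ne_top_of_nonneg h1.le hc),
      ENNReal.mul_rpow_of_nonneg _ _ h2.le, ← ENNReal.rpow_mul, h3, ENNReal.rpow_one]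

lemma LqNorm_split {q : ℝ≥0∞} (hq0 : 0 < q) : ∃ C : ℝ≥0∞, C ≠ ∞ ∧ ∀ (S A B : Set ℝ) (u : ℝ)
    (f : ℝ → ℝ≥0∞), S ⊆ A ∪ B ∪ {u} → LqNorm q S f ≤ C * (LqNorm q A f + LqNorm q B f) := by
  have hle : ∀ (S A B : Set ℝ) (u : ℝ), S ⊆ A ∪ B ∪ {u} →
      (volume.restrict S : Measure ℝ) ≤ volume.restrict A + volume.restrict B := by
    intro S A B u h
    calc (volume.restrict S : Measure ℝ) ≤ volume.restrict (A ∪ B ∪ {u}) :=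
          Measure.restrict_mono h le_rfl
      _ ≤ volume.restrict (A ∪ B) + volume.restrict {u} := Measure.restrict_union_le _ _
      _ = volume.restrict (A ∪ B) := by
          rw [(Measure.restrict_eq_zero (s := {u})).2 (by simp), add_zero]
      _ ≤ _ := Measure.restrict_union_le _ _
  by_cases hq : q = ∞
  · subst hq
    refine ⟨1, by simp, fun S A B u f h => ?_⟩
    rw [LqNorm_top, LqNorm_top, LqNorm_top, one_mul]
    refine (essSup_mono_measure (hle S A B u h).absolutelyContinuous).trans ?_
    refine essSup_le_of_ae_le _ ?_
    refine ae_add_measure_iff.2 ⟨?_, ?_⟩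
    · filter_upwards [ENNReal.ae_le_essSup (μ := volume.restrict A) f] with x hx
      exact hx.trans le_self_add
    · filter_upwards [ENNReal.ae_le_essSup (μ := volume.restrict B) f] with x hx
      exact hx.trans le_add_self
  · obtain ⟨h1, h2, h3⟩ := toReal_inv_pos hq0 hq
    refine ⟨2 ^ q⁻¹.toReal, by simp [ENNReal.rpow_eq_top_iff], fun S A B u f h => ?_⟩
    rw [LqNorm_of_ne_top hq, LqNorm_of_ne_top hq, LqNorm_of_ne_top hq]
    have : ∫⁻ t in S, f t ^ q.toReal ≤
        (∫⁻ t in A, f t ^ q.toReal) + ∫⁻ t in B, f t ^ q.toReal := by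
      rw [← lintegral_add_measure]
      exact lintegral_mono' (hle S A B u h) le_rfl
    refine (ENNReal.rpow_le_rpow this h2.le).trans ?_
    generalize (∫⁻ t in A, f t ^ q.toReal) = X
    generalize (∫⁻ t in B, f t ^ q.toReal) = Y
    have h4 : X + Y ≤ 2 * max X Y := by
      rw [two_mul]; exact add_le_add (le_max_left _ _) (le_max_right _ _)
    refine (ENNReal.rpow_le_rpow h4 h2.le).trans ?_
    rw [ENNReal.mul_rpow_of_nonneg _ _ h2.le]
    gcongr
    rcases le_total X Y with h | h
    · rw [max_eq_right h]; exact le_add_self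
    · rw [max_eq_left h]; exact le_self_add

lemma LqNorm_block {q : ℝ≥0∞} (hq0 : 0 < q) {s : ℝ} (hs : 0 < s) {M : ℝ≥0∞} {f : ℝ → ℝ≥0∞}
    {S : Set ℝ} (hS : Ioo s (2 * s) ⊆ S) (h : ∀ x ∈ Ioo s (2 * s), M ≤ f x) :
    ENNReal.ofReal (s ^ q⁻¹.toReal) * M ≤ LqNorm q S f := by
  refine le_trans ?_ (LqNorm_mono_set hS f)
  refine le_trans ?_ (LqNorm_mono measurableSet_Ioo h)
  by_cases hq : q = ∞
  · subst hq
    rw [LqNorm_top, essSup_const]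
    · simp
    · simp [Measure.restrict_eq_zero, hs]
  · obtain ⟨h1, h2, h3⟩ := toReal_inv_pos hq0 hq
    rw [LqNorm_of_ne_top hq, setLIntegral_const, Real.volume_Ioo,
      ENNReal.mul_rpow_of_nonneg _ _ h2.le, ← ENNReal.rpow_mul, h3, ENNReal.rpow_one, mul_comm]
    gcongr
    rw [ENNReal.ofReal_rpow_of_nonneg (by linarith) h2.le]
    apply le_of_eq
    ring_nf

lemma LqNorm_tail_pow {q : ℝ≥0∞} (hq0 : 0 < q) {γ : ℝ} (hγ : 0 < γ) : ∃ C : ℝ≥0∞, C ≠ ∞ ∧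
    ∀ t, 0 < t → LqNorm q (Ioi t) (fun s => ENNReal.ofReal (s ^ (-γ - q⁻¹.toReal))) ≤
      C * ENNReal.ofReal (t ^ (-γ)) := by
  by_cases hq : q = ∞
  · subst hq
    refine ⟨1, by simp, fun t ht => ?_⟩
    rw [LqNorm_top, one_mul]
    refine essSup_le_of_ae_le _ ((ae_restrict_iff' measurableSet_Ioi).2 (Eventually.of_forall ?_))
    intro x hx
    apply ENNReal.ofReal_le_ofReal
    simp only [ENNReal.inv_top, ENNReal.toReal_zero, sub_zero]
    exact Real.rpow_le_rpow_of_nonpos ht (mem_Ioi.1 hx).le (by linarith)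
  · obtain ⟨h1, h2, h3⟩ := toReal_inv_pos hq0 hq
    refine ⟨ENNReal.ofReal ((γ * q.toReal)⁻¹ ^ q⁻¹.toReal), by simp, fun t ht => ?_⟩
    rw [LqNorm_of_ne_top hq, ← ENNReal.ofReal_mul (by positivity)]
    have e : ∫⁻ s in Ioi t, (ENNReal.ofReal (s ^ (-γ - q⁻¹.toReal))) ^ q.toReal =
        ENNReal.ofReal ((γ * q.toReal)⁻¹ * t ^ (-γ * q.toReal)) := by
      have hlt : -γ * q.toReal - 1 < -1 := by nlinarith
      have : ∫⁻ s in Ioi t, (ENNReal.ofReal (s ^ (-γ - q⁻¹.toReal))) ^ q.toReal =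
          ∫⁻ s in Ioi t, ENNReal.ofReal (s ^ (-γ * q.toReal - 1)) := by
        refine setLIntegral_congr_fun measurableSet_Ioi fun s hs => ?_
        have hs0 : 0 < s := ht.trans hs
        rw [ENNReal.ofReal_rpow_of_nonneg (by positivity) h1.le, ← Real.rpow_mul hs0.le]
        congr 2; rw [sub_mul, mul_comm q⁻¹.toReal, h3]
      rw [this, ← ofReal_integral_eq_lintegral_ofReal (integrableOn_Ioi_rpow_of_lt hlt ht),
        integral_Ioi_rpow_of_lt hlt ht]
      · congr 1
        rw [sub_add_cancel]; field_simp
      · refine (ae_restrict_iff' measurableSet_Ioi).2 (Eventually.of_forall fun s hs => ?_)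
        have hs0 : 0 < s := ht.trans hs
        simp only [Pi.zero_apply]; positivity
    rw [e, ENNReal.ofReal_rpow_of_nonneg (by positivity) h2.le]
    apply le_of_eq
    rw [Real.mul_rpow (by positivity) (by positivity), ← Real.rpow_mul ht.le, mul_assoc, h3,
      mul_one]

lemma LqNorm_head_pow {q : ℝ≥0∞} (hq0 : 0 < q) {γ : ℝ} (hγ : 0 < γ) : ∃ C : ℝ≥0∞, C ≠ ∞ ∧
    ∀ t, 0 < t → LqNorm q (Ioo 0 t) (fun s => ENNReal.ofReal (s ^ (γ - q⁻¹.toReal))) ≤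
      C * ENNReal.ofReal (t ^ γ) := by
  by_cases hq : q = ∞
  · subst hq
    refine ⟨1, by simp, fun t ht => ?_⟩
    rw [LqNorm_top, one_mul]
    refine essSup_le_of_ae_le _ ((ae_restrict_iff' measurableSet_Ioo).2 (Eventually.of_forall ?_))
    intro x hx
    apply ENNReal.ofReal_le_ofReal
    simp only [ENNReal.inv_top, ENNReal.toReal_zero, sub_zero]
    exact Real.rpow_le_rpow hx.1.le hx.2.le hγ.le
  · obtain ⟨h1, h2, h3⟩ := toReal_inv_pos hq0 hq
    refine ⟨ENNReal.ofReal ((γ * q.toReal)⁻¹ ^ q⁻¹.toReal), by simp, fun t ht => ?_⟩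
    rw [LqNorm_of_ne_top hq, ← ENNReal.ofReal_mul (by positivity)]
    have e : ∫⁻ s in Ioo 0 t, (ENNReal.ofReal (s ^ (γ - q⁻¹.toReal))) ^ q.toReal =
        ENNReal.ofReal ((γ * q.toReal)⁻¹ * t ^ (γ * q.toReal)) := by
      have hgq : 0 < γ * q.toReal := by positivity
      have hlt : -1 < γ * q.toReal - 1 := by linarith
      have : ∫⁻ s in Ioo 0 t, (ENNReal.ofReal (s ^ (γ - q⁻¹.toReal))) ^ q.toReal =
          ∫⁻ s in Ioo 0 t, ENNReal.ofReal (s ^ (γ * q.toReal - 1)) := by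
        refine setLIntegral_congr_fun measurableSet_Ioo fun s hs => ?_
        have hs0 : 0 < s := hs.1
        rw [ENNReal.ofReal_rpow_of_nonneg (by positivity) h1.le, ← Real.rpow_mul hs0.le]
        congr 2; rw [sub_mul, mul_comm q⁻¹.toReal, h3]
      have hInt : IntegrableOn (fun s : ℝ => s ^ (γ * q.toReal - 1)) (Ioo 0 t) := by
        have := (intervalIntegral.intervalIntegrable_rpow' (a := 0) (b := t) hlt).1
        exact this.mono_set Ioo_subset_Ioc_self
      rw [this, ← ofReal_integral_eq_lintegral_ofReal hInt]
      · congr 1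
        rw [← integral_Ioc_eq_integral_Ioo, ← intervalIntegral.integral_of_le ht.le,
          integral_rpow (Or.inl hlt), sub_add_cancel, Real.zero_rpow hgq.ne']
        field_simp; simp
      · refine (ae_restrict_iff' measurableSet_Ioo).2 (Eventually.of_forall fun s hs => ?_)
        have hs0 : 0 < s := hs.1
        simp only [Pi.zero_apply]; positivity
    rw [e, ENNReal.ofReal_rpow_of_nonneg (by positivity) h2.le]
    apply le_of_eq
    rw [Real.mul_rpow (by positivity) (by positivity), ← Real.rpow_mul ht.le, mul_assoc, h3,
      mul_one]

lemma LqNorm_tail {q : ℝ≥0∞} (hq0 : 0 < q) {γ : ℝ} (hγ : 0 < γ) {b : ℝ → ℝ} (hb : SVL b) :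
    ∃ C : ℝ≥0∞, C ≠ ∞ ∧
    ∀ t, 0 < t → LqNorm q (Ioi t) (fun s => ENNReal.ofReal (s ^ (-γ - q⁻¹.toReal) * b s)) ≤
      C * ENNReal.ofReal (t ^ (-γ) * b t) := by
  obtain ⟨C, hC, h⟩ := LqNorm_tail_pow hq0 (half_pos hγ)
  obtain ⟨D, hD, hb2⟩ := hb.2 (γ / 2) (half_pos hγ)
  refine ⟨ENNReal.ofReal D * C, ENNReal.mul_ne_top (by simp) hC, fun t ht => ?_⟩
  have bt := hb.1 t ht
  have : LqNorm q (Ioi t) (fun s => ENNReal.ofReal (s ^ (-γ - q⁻¹.toReal) * b s)) ≤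
      LqNorm q (Ioi t) (fun s => ENNReal.ofReal (D * t ^ (-(γ / 2)) * b t) *
        ENNReal.ofReal (s ^ (-(γ/2) - q⁻¹.toReal))) := by
    refine LqNorm_mono measurableSet_Ioi fun s hs => ?_
    have hs0 : 0 < s := ht.trans hs
    rw [← ENNReal.ofReal_mul (by positivity)]
    apply ENNReal.ofReal_le_ofReal
    have h1 := (hb2 t s ht (mem_Ioi.1 hs).le).1
    calc s ^ (-γ - q⁻¹.toReal) * b s ≤ s ^ (-γ - q⁻¹.toReal) * (D * (s / t) ^ (γ / 2) * b t) := by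
          gcongr
      _ = D * t ^ (-(γ / 2)) * b t * (s ^ (γ / 2) * s ^ (-γ - q⁻¹.toReal)) := by
          rw [Real.div_rpow hs0.le ht.le, Real.rpow_neg ht.le]; field_simp
      _ = _ := by rw [← Real.rpow_add hs0]; ring_nf
  refine this.trans ?_
  rw [LqNorm_const_mul hq0 _ (by simp)]
  refine (mul_le_mul_right (h t ht) _).trans (le_of_eq ?_)
  rw [show t ^ (-γ) * b t = t ^ (-(γ / 2)) * b t * t ^ (-(γ / 2)) by
    rw [mul_right_comm, ← Real.rpow_add ht]; ring_nf]
  rw [mul_assoc D, ENNReal.ofReal_mul hD.le, ENNReal.ofReal_mul (p := t ^ (-(γ / 2)) * b t)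
    (by positivity)]
  ring

lemma LqNorm_head {q : ℝ≥0∞} (hq0 : 0 < q) {γ : ℝ} (hγ : 0 < γ) {b : ℝ → ℝ} (hb : SVL b) :
    ∃ C : ℝ≥0∞, C ≠ ∞ ∧
    ∀ t, 0 < t → LqNorm q (Ioo 0 t) (fun s => ENNReal.ofReal (s ^ (γ - q⁻¹.toReal) * b s)) ≤
      C * ENNReal.ofReal (t ^ γ * b t) := by
  obtain ⟨C, hC, h⟩ := LqNorm_head_pow hq0 (half_pos hγ)
  obtain ⟨D, hD, hb2⟩ := hb.2 (γ / 2) (half_pos hγ)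
  refine ⟨ENNReal.ofReal D * C, ENNReal.mul_ne_top (by simp) hC, fun t ht => ?_⟩
  have bt := hb.1 t ht
  have : LqNorm q (Ioo 0 t) (fun s => ENNReal.ofReal (s ^ (γ - q⁻¹.toReal) * b s)) ≤
      LqNorm q (Ioo 0 t) (fun s => ENNReal.ofReal (D * t ^ (γ / 2) * b t) *
        ENNReal.ofReal (s ^ (γ/2 - q⁻¹.toReal))) := by
    refine LqNorm_mono measurableSet_Ioo fun s hs => ?_
    have hs0 : 0 < s := hs.1
    rw [← ENNReal.ofReal_mul (by positivity)]
    apply ENNReal.ofReal_le_ofReal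
    have h1 := (hb2 s t hs0 hs.2.le).2
    calc s ^ (γ - q⁻¹.toReal) * b s ≤ s ^ (γ - q⁻¹.toReal) * (D * (t / s) ^ (γ / 2) * b t) := by
          gcongr
      _ = D * t ^ (γ / 2) * b t * (s ^ (-(γ / 2)) * s ^ (γ - q⁻¹.toReal)) := by
          rw [Real.div_rpow ht.le hs0.le, Real.rpow_neg hs0.le]; field_simp
      _ = _ := by rw [← Real.rpow_add hs0]; ring_nf
  refine this.trans ?_
  rw [LqNorm_const_mul hq0 _ (by simp)]
  refine (mul_le_mul_right (h t ht) _).trans (le_of_eq ?_)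
  rw [show t ^ γ * b t = t ^ (γ / 2) * b t * t ^ (γ / 2) by
    rw [mul_right_comm, ← Real.rpow_add ht]; ring_nf]
  rw [mul_assoc D, ENNReal.ofReal_mul hD.le, ENNReal.ofReal_mul (p := t ^ (γ / 2) * b t)
    (by positivity)]
  ring

/-! ### The functions `c₀` and `c₁` -/

lemma svWgt_mul_ofReal {r : ℝ≥0∞} {β : ℝ → ℝ} {s : ℝ} (hs : 0 < s) :
    svWgt r β s = ENNReal.ofReal (s ^ (-r⁻¹.toReal)) * ENNReal.ofReal (β s) := by
  rw [svWgt, ENNReal.ofReal_mul (by positivity)]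

/-- `β(t) ≲ ‖s^{-1/r} β(s)‖_{(0,t)}`. -/
lemma le_head {r : ℝ≥0∞} (hr : 0 < r) {β : ℝ → ℝ} (hβ : SVL β) : ∃ C : ℝ≥0∞, C ≠ ∞ ∧
    ∀ t, 0 < t → ENNReal.ofReal (β t) ≤ C * LqNorm r (Ioo 0 t) (svWgt r β) := by
  obtain ⟨D, hD, h⟩ := hβ.2 1 one_pos
  refine ⟨ENNReal.ofReal (D * 2 * 2 ^ r⁻¹.toReal), by simp, fun t ht => ?_⟩
  have b1 := hβ.1 t ht
  have key : ENNReal.ofReal ((t / 2) ^ r⁻¹.toReal) *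
      ENNReal.ofReal (t ^ (-r⁻¹.toReal) * (β t / (D * 2))) ≤
      LqNorm r (Ioo 0 t) (svWgt r β) := by
    refine LqNorm_block hr (half_pos ht) (fun x hx => ⟨by linarith [hx.1], by linarith [hx.2]⟩) ?_
    intro x hx
    have hx0 : 0 < x := by linarith [hx.1]
    have hxt : x ≤ t := by linarith [hx.2]
    apply ENNReal.ofReal_le_ofReal
    have b2 := hβ.1 x hx0
    apply mul_le_mul
    · exact Real.rpow_le_rpow_of_nonpos hx0 hxt (by simp)
    · rw [div_le_iff₀ (by positivity)]
      refine (h x t hx0 hxt).1.trans ?_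
      rw [Real.rpow_one]
      have : t / x ≤ 2 := by rw [div_le_iff₀ hx0]; linarith [hx.1]
      calc D * (t / x) * β x ≤ D * 2 * β x := by gcongr
        _ = _ := by ring
    · positivity
    · positivity
  refine le_trans ?_ (mul_le_mul_right key _)
  rw [← ENNReal.ofReal_mul (by positivity), ← ENNReal.ofReal_mul (by positivity)]
  apply ENNReal.ofReal_le_ofReal
  apply le_of_eq
  rw [Real.div_rpow ht.le (by norm_num), Real.rpow_neg ht.le]
  have := Real.rpow_pos_of_pos ht r⁻¹.toReal
  field_simp

lemma le_tail {r : ℝ≥0∞} (hr : 0 < r) {β : ℝ → ℝ} (hβ : SVL β) : ∃ C : ℝ≥0∞, C ≠ ∞ ∧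
    ∀ t, 0 < t → ENNReal.ofReal (β t) ≤ C * LqNorm r (Ioi t) (svWgt r β) := by
  obtain ⟨D, hD, h⟩ := hβ.2 1 one_pos
  refine ⟨ENNReal.ofReal (D * 2 * 2 ^ r⁻¹.toReal), by simp, fun t ht => ?_⟩
  have b1 := hβ.1 t ht
  have key : ENNReal.ofReal (t ^ r⁻¹.toReal) *
      ENNReal.ofReal ((2 * t) ^ (-r⁻¹.toReal) * (β t / (D * 2))) ≤
      LqNorm r (Ioi t) (svWgt r β) := by
    refine LqNorm_block hr ht (fun x hx => hx.1) ?_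
    intro x hx
    have hx0 : 0 < x := by linarith [hx.1]
    have hxt : t ≤ x := by linarith [hx.1]
    apply ENNReal.ofReal_le_ofReal
    have b2 := hβ.1 x hx0
    apply mul_le_mul
    · exact Real.rpow_le_rpow_of_nonpos hx0 hx.2.le (by simp)
    · rw [div_le_iff₀ (by positivity)]
      refine (h t x ht hxt).2.trans ?_
      rw [Real.rpow_one]
      have : x / t ≤ 2 := by rw [div_le_iff₀ ht]; linarith [hx.2]
      calc D * (x / t) * β x ≤ D * 2 * β x := by gcongr
        _ = _ := by ring
    · positivity
    · positivity
  refine le_trans ?_ (mul_le_mul_right key _)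
  rw [← ENNReal.ofReal_mul (by positivity), ← ENNReal.ofReal_mul (by positivity)]
  apply ENNReal.ofReal_le_ofReal
  apply le_of_eq
  rw [Real.mul_rpow (by norm_num) ht.le, Real.rpow_neg ht.le, Real.rpow_neg (by norm_num)]
  have := Real.rpow_pos_of_pos ht r⁻¹.toReal
  field_simp

lemma head_growth {r : ℝ≥0∞} (hr : 0 < r) {β : ℝ → ℝ} (hβ : SVL β) {ε : ℝ} (hε : 0 < ε) :
    ∃ C : ℝ≥0∞, C ≠ ∞ ∧ ∀ t v, 0 < t → t ≤ v → LqNorm r (Ioo 0 v) (svWgt r β) ≤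
      C * ENNReal.ofReal ((v / t) ^ ε) * LqNorm r (Ioo 0 t) (svWgt r β) := by
  obtain ⟨C₁, hC₁, h1⟩ := LqNorm_split hr
  obtain ⟨C₂, hC₂, h2⟩ := le_head hr hβ
  obtain ⟨C₃, hC₃, h3⟩ := LqNorm_head_pow hr hε
  obtain ⟨D, hD, h4⟩ := hβ.2 ε hε
  refine ⟨C₁ * (1 + ENNReal.ofReal D * C₂ * C₃), by finiteness, fun t v ht htv => ?_⟩
  have hv : 0 < v := ht.trans_le htv
  have s1 := h1 (Ioo 0 v) (Ioo 0 t) (Ioo t v) t (svWgt r β) (by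
    intro x hx
    rcases lt_trichotomy x t with h | h | h
    · exact Or.inl (Or.inl ⟨hx.1, h⟩)
    · exact Or.inr h
    · exact Or.inl (Or.inr ⟨h, hx.2⟩))
  have bt := hβ.1 t ht
  have s2 : LqNorm r (Ioo t v) (svWgt r β) ≤ ENNReal.ofReal (D * t ^ (-ε) * β t) *
      (C₃ * ENNReal.ofReal (v ^ ε)) := by
    calc LqNorm r (Ioo t v) (svWgt r β) ≤ LqNorm r (Ioo t v) (fun s =>
          ENNReal.ofReal (D * t ^ (-ε) * β t) * ENNReal.ofReal (s ^ (ε - r⁻¹.toReal))) := by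
          refine LqNorm_mono measurableSet_Ioo fun s hs => ?_
          have hs0 : 0 < s := ht.trans hs.1
          rw [← ENNReal.ofReal_mul (by positivity)]
          apply ENNReal.ofReal_le_ofReal
          calc s ^ (-r⁻¹.toReal) * β s ≤ s ^ (-r⁻¹.toReal) * (D * (s / t) ^ ε * β t) := by
                gcongr; exact (h4 t s ht hs.1.le).1
            _ = _ := by
                rw [Real.div_rpow hs0.le ht.le, Real.rpow_neg ht.le, sub_eq_add_neg,
                  Real.rpow_add hs0]; field_simp
      _ = _ := LqNorm_const_mul hr _ (by simp) _
      _ ≤ _ := by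
        gcongr
        exact (LqNorm_mono_set (t := Ioo 0 v) (fun x hx => ⟨ht.trans hx.1, hx.2⟩) _).trans (h3 v hv)
  have e1 : ENNReal.ofReal (D * t ^ (-ε) * β t) * (C₃ * ENNReal.ofReal (v ^ ε)) =
      ENNReal.ofReal D * C₃ * ENNReal.ofReal ((v / t) ^ ε) * ENNReal.ofReal (β t) := by
    rw [Real.div_rpow hv.le ht.le, div_eq_mul_inv, ← Real.rpow_neg ht.le,
      ENNReal.ofReal_mul (by positivity), ENNReal.ofReal_mul (by positivity),
      ENNReal.ofReal_mul (by positivity)]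
    ring
  rw [e1] at s2
  have one_le : (1 : ℝ≥0∞) ≤ ENNReal.ofReal ((v / t) ^ ε) := by
    rw [← ENNReal.ofReal_one]
    apply ENNReal.ofReal_le_ofReal
    exact Real.one_le_rpow (by rwa [one_le_div ht]) hε.le
  calc _ ≤ _ := s1
    _ ≤ C₁ * (ENNReal.ofReal ((v / t) ^ ε) * LqNorm r (Ioo 0 t) (svWgt r β) +
        ENNReal.ofReal D * C₃ * ENNReal.ofReal ((v / t) ^ ε) *
          (C₂ * LqNorm r (Ioo 0 t) (svWgt r β))) := by
        gcongr
        · exact le_mul_of_one_le_left (zero_le) one_le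
        · exact s2.trans (by gcongr; exact h2 t ht)
    _ = _ := by ring

lemma tail_growth {r : ℝ≥0∞} (hr : 0 < r) {β : ℝ → ℝ} (hβ : SVL β) {ε : ℝ} (hε : 0 < ε) :
    ∃ C : ℝ≥0∞, C ≠ ∞ ∧ ∀ t v, 0 < t → t ≤ v → LqNorm r (Ioi t) (svWgt r β) ≤
      C * ENNReal.ofReal ((v / t) ^ ε) * LqNorm r (Ioi v) (svWgt r β) := by
  obtain ⟨C₁, hC₁, h1⟩ := LqNorm_split hr
  obtain ⟨C₂, hC₂, h2⟩ := le_tail hr hβ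
  obtain ⟨C₃, hC₃, h3⟩ := LqNorm_tail_pow hr hε
  obtain ⟨D, hD, h4⟩ := hβ.2 ε hε
  refine ⟨C₁ * (1 + ENNReal.ofReal D * C₂ * C₃), by finiteness, fun t v ht htv => ?_⟩
  have hv : 0 < v := ht.trans_le htv
  have s1 := h1 (Ioi t) (Ioi v) (Ioo t v) v (svWgt r β) (by
    intro x hx
    rcases lt_trichotomy x v with h | h | h
    · exact Or.inl (Or.inr ⟨hx, h⟩)
    · exact Or.inr h
    · exact Or.inl (Or.inl h))
  have bt := hβ.1 v hv
  have s2 : LqNorm r (Ioo t v) (svWgt r β) ≤ ENNReal.ofReal (D * v ^ ε * β v) *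
      (C₃ * ENNReal.ofReal (t ^ (-ε))) := by
    calc LqNorm r (Ioo t v) (svWgt r β) ≤ LqNorm r (Ioo t v) (fun s =>
          ENNReal.ofReal (D * v ^ ε * β v) * ENNReal.ofReal (s ^ (-ε - r⁻¹.toReal))) := by
          refine LqNorm_mono measurableSet_Ioo fun s hs => ?_
          have hs0 : 0 < s := ht.trans hs.1
          rw [← ENNReal.ofReal_mul (by positivity)]
          apply ENNReal.ofReal_le_ofReal
          calc s ^ (-r⁻¹.toReal) * β s ≤ s ^ (-r⁻¹.toReal) * (D * (v / s) ^ ε * β v) := by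
                gcongr; exact (h4 s v hs0 hs.2.le).2
            _ = _ := by
                rw [Real.div_rpow hv.le hs0.le, sub_eq_add_neg,
                  Real.rpow_add hs0, Real.rpow_neg hs0.le ε]; field_simp
      _ = _ := LqNorm_const_mul hr _ (by simp) _
      _ ≤ _ := by
        gcongr
        exact (LqNorm_mono_set (fun x hx => hx.1) _).trans (h3 t ht)
  have e1 : ENNReal.ofReal (D * v ^ ε * β v) * (C₃ * ENNReal.ofReal (t ^ (-ε))) =
      ENNReal.ofReal D * C₃ * ENNReal.ofReal ((v / t) ^ ε) * ENNReal.ofReal (β v) := by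
    rw [Real.div_rpow hv.le ht.le, div_eq_mul_inv, ← Real.rpow_neg ht.le,
      ENNReal.ofReal_mul (by positivity), ENNReal.ofReal_mul (by positivity),
      ENNReal.ofReal_mul (by positivity)]
    ring
  rw [e1] at s2
  have one_le : (1 : ℝ≥0∞) ≤ ENNReal.ofReal ((v / t) ^ ε) := by
    rw [← ENNReal.ofReal_one]
    apply ENNReal.ofReal_le_ofReal
    exact Real.one_le_rpow (by rwa [one_le_div ht]) hε.le
  calc _ ≤ _ := s1
    _ ≤ C₁ * (ENNReal.ofReal ((v / t) ^ ε) * LqNorm r (Ioi v) (svWgt r β) +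
        ENNReal.ofReal D * C₃ * ENNReal.ofReal ((v / t) ^ ε) *
          (C₂ * LqNorm r (Ioi v) (svWgt r β))) := by
        gcongr
        · exact le_mul_of_one_le_left (zero_le) one_le
        · exact s2.trans (by gcongr; exact h2 v hv)
    _ = _ := by ring

lemma head_ne_top {r : ℝ≥0∞} (hr : 0 < r) {β : ℝ → ℝ} (hβ : SVL β)
    (hfin : LqNorm r (Ioo 0 1) (svWgt r β) ≠ ∞) {t : ℝ} (ht : 0 < t) :
    LqNorm r (Ioo 0 t) (svWgt r β) ≠ ∞ := by
  obtain ⟨C, hC, h⟩ := head_growth hr hβ one_pos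
  rcases le_total t 1 with h1 | h1
  · exact ne_top_of_le_ne_top hfin (LqNorm_mono_set (Ioo_subset_Ioo_right h1) _)
  · exact ne_top_of_le_ne_top (by finiteness) (h 1 t one_pos h1)

lemma tail_ne_top {r : ℝ≥0∞} (hr : 0 < r) {β : ℝ → ℝ} (hβ : SVL β)
    (hfin : LqNorm r (Ioi 1) (svWgt r β) ≠ ∞) {t : ℝ} (ht : 0 < t) :
    LqNorm r (Ioi t) (svWgt r β) ≠ ∞ := by
  obtain ⟨C, hC, h⟩ := tail_growth hr hβ one_pos
  rcases le_total t 1 with h1 | h1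
  · exact ne_top_of_le_ne_top (by finiteness) (h t 1 ht h1)
  · exact ne_top_of_le_ne_top hfin (LqNorm_mono_set (Ioi_subset_Ioi h1) _)

lemma svl_of_growth {g : ℝ → ℝ≥0∞} (h0 : ∀ t, 0 < t → g t ≠ 0) (htop : ∀ t, 0 < t → g t ≠ ∞)
    (h : ∀ ε : ℝ, 0 < ε → ∃ C : ℝ≥0∞, C ≠ ∞ ∧ ∀ t v, 0 < t → t ≤ v →
      g v ≤ C * ENNReal.ofReal ((v / t) ^ ε) * g t ∧
      g t ≤ C * ENNReal.ofReal ((v / t) ^ ε) * g v) :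
    SVL (fun t => (g t).toReal) := by
  refine ⟨fun t ht => ENNReal.toReal_pos (h0 t ht) (htop t ht), fun ε hε => ?_⟩
  obtain ⟨C, hC, hg⟩ := h ε hε
  refine ⟨C.toReal + 1, by positivity, fun x y hx hxy => ?_⟩
  have hy := hx.trans_le hxy
  have key : ∀ X Y : ℝ≥0∞, Y ≠ ∞ → X ≤ C * ENNReal.ofReal ((y / x) ^ ε) * Y →
      X.toReal ≤ (C.toReal + 1) * (y / x) ^ ε * Y.toReal := by
    intro X Y hY hX
    have := ENNReal.toReal_mono (by finiteness) hX
    rw [ENNReal.toReal_mul, ENNReal.toReal_mul, ENNReal.toReal_ofReal (by positivity)] at this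
    refine this.trans ?_
    gcongr
    linarith
  exact ⟨key _ _ (htop x hx) (hg x y hx hxy).1, key _ _ (htop y hy) (hg x y hx hxy).2⟩

lemma svl_head {r : ℝ≥0∞} (hr : 0 < r) {β : ℝ → ℝ} (hβ : SVL β)
    (hfin : LqNorm r (Ioo 0 1) (svWgt r β) ≠ ∞) :
    SVL (fun t => (LqNorm r (Ioo 0 t) (svWgt r β)).toReal) := by
  refine svl_of_growth ?_ (fun t ht => head_ne_top hr hβ hfin ht) ?_
  · intro t ht h0
    obtain ⟨C, hC, h⟩ := le_head hr hβ
    have := h t ht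
    rw [h0, mul_zero] at this
    have h1 := hβ.1 t ht
    simp only [nonpos_iff_eq_zero, ENNReal.ofReal_eq_zero] at this
    linarith
  · intro ε hε
    obtain ⟨C, hC, h⟩ := head_growth hr hβ hε
    refine ⟨C + 1, by finiteness, fun t v ht htv =>
      ⟨(h t v ht htv).trans (by gcongr; exact le_self_add), ?_⟩⟩
    have one_le : (1 : ℝ≥0∞) ≤ ENNReal.ofReal ((v / t) ^ ε) := by
      rw [← ENNReal.ofReal_one]
      apply ENNReal.ofReal_le_ofReal
      exact Real.one_le_rpow (by rwa [one_le_div ht]) hε.le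
    refine (LqNorm_mono_set (Ioo_subset_Ioo_right htv) _).trans ?_
    exact le_mul_of_one_le_left zero_le (one_le_mul le_add_self one_le)

lemma svl_tail {r : ℝ≥0∞} (hr : 0 < r) {β : ℝ → ℝ} (hβ : SVL β)
    (hfin : LqNorm r (Ioi 1) (svWgt r β) ≠ ∞) :
    SVL (fun t => (LqNorm r (Ioi t) (svWgt r β)).toReal) := by
  refine svl_of_growth ?_ (fun t ht => tail_ne_top hr hβ hfin ht) ?_
  · intro t ht h0
    obtain ⟨C, hC, h⟩ := le_tail hr hβ
    have := h t ht
    rw [h0, mul_zero] at this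
    have h1 := hβ.1 t ht
    simp only [nonpos_iff_eq_zero, ENNReal.ofReal_eq_zero] at this
    linarith
  · intro ε hε
    obtain ⟨C, hC, h⟩ := tail_growth hr hβ hε
    refine ⟨C + 1, by finiteness, fun t v ht htv => ⟨?_, (h t v ht htv).trans (by gcongr; exact le_self_add)⟩⟩
    have one_le : (1 : ℝ≥0∞) ≤ ENNReal.ofReal ((v / t) ^ ε) := by
      rw [← ENNReal.ofReal_one]
      apply ENNReal.ofReal_le_ofReal
      exact Real.one_le_rpow (by rwa [one_le_div ht]) hε.le
    refine (LqNorm_mono_set (Ioi_subset_Ioi htv) _).trans ?_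
    exact le_mul_of_one_le_left zero_le (one_le_mul le_add_self one_le)

/-! ### Estimates for the `𝓡` and `𝓛` functionals -/

/-- The inner weight times `κ`. -/
def innF (σ : ℝ) (q : ℝ≥0∞) (a : ℝ → ℝ) (κ : ℝ → ℝ≥0∞) : ℝ → ℝ≥0∞ :=
  fun u => ENNReal.ofReal (u ^ (-σ - q⁻¹.toReal) * a u) * κ u

def RF (σ : ℝ) (r q : ℝ≥0∞) (b a : ℝ → ℝ) (κ : ℝ → ℝ≥0∞) : ℝ≥0∞ :=
  LqNorm r (Ioi 0) fun t =>
    ENNReal.ofReal (t ^ (-(r⁻¹.toReal)) * (b t / a t)) * LqNorm q (Ioi t) (innF σ q a κ)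

def LF (σ : ℝ) (r q : ℝ≥0∞) (b a : ℝ → ℝ) (κ : ℝ → ℝ≥0∞) : ℝ≥0∞ :=
  LqNorm r (Ioi 0) fun t =>
    ENNReal.ofReal (t ^ (-(r⁻¹.toReal)) * (b t / a t)) * LqNorm q (Ioo 0 t) (innF σ q a κ)

lemma inner_block {σ : ℝ} (hσ : 0 < σ) {q : ℝ≥0∞} (hq : 0 < q) {a : ℝ → ℝ} (ha : SVL a) :
    ∃ C : ℝ≥0∞, C ≠ ∞ ∧ ∀ κ : ℝ → ℝ≥0∞, (∀ x y, 0 < x → x ≤ y → κ x ≤ κ y) →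
      ∀ (s : ℝ) (S : Set ℝ), 0 < s → Ioo s (2 * s) ⊆ S →
      ENNReal.ofReal (s ^ (-σ) * a s) * κ s ≤ C * LqNorm q S (innF σ q a κ) := by
  obtain ⟨D, hD, h⟩ := ha.2 1 one_pos
  refine ⟨ENNReal.ofReal (D * 2 * 2 ^ (σ + q⁻¹.toReal)), by simp, fun κ hκ s S hs hS => ?_⟩
  have as := ha.1 s hs
  have key : ENNReal.ofReal (s ^ q⁻¹.toReal) *
      (ENNReal.ofReal ((2 * s) ^ (-σ - q⁻¹.toReal) * (a s / (D * 2))) * κ s) ≤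
      LqNorm q S (innF σ q a κ) := by
    refine LqNorm_block hq hs hS fun x hx => ?_
    have hx0 : 0 < x := hs.trans hx.1
    refine mul_le_mul' (ENNReal.ofReal_le_ofReal ?_) (hκ s x hs hx.1.le)
    have hqq : 0 ≤ q⁻¹.toReal := by simp
    apply mul_le_mul
    · exact Real.rpow_le_rpow_of_nonpos hx0 hx.2.le (by linarith)
    · rw [div_le_iff₀ (by positivity)]
      refine (h s x hs hx.1.le).2.trans ?_
      rw [Real.rpow_one]
      have : x / s ≤ 2 := by rw [div_le_iff₀ hs]; linarith [hx.2]
      have := ha.1 x hx0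
      calc D * (x / s) * a x ≤ D * 2 * a x := by gcongr
        _ = _ := by ring
    · positivity
    · positivity
  refine le_trans ?_ (mul_le_mul_right key _)
  rw [← mul_assoc, ← mul_assoc, ← ENNReal.ofReal_mul (by positivity),
    ← ENNReal.ofReal_mul (by positivity)]
  refine mul_le_mul_left (ENNReal.ofReal_le_ofReal ?_) _
  apply le_of_eq
  rw [Real.mul_rpow (by norm_num) hs.le, show -σ - q⁻¹.toReal = -(σ + q⁻¹.toReal) by ring,
    Real.rpow_neg (by norm_num : (0 : ℝ) ≤ 2), Real.rpow_neg hs.le σ,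
    Real.rpow_neg hs.le (σ + q⁻¹.toReal), Real.rpow_add hs]
  field_simp

lemma R_lower {σ : ℝ} (hσ : 0 < σ) {r q : ℝ≥0∞} (hr : 0 < r) (hq : 0 < q) {a : ℝ → ℝ}
    (b : ℝ → ℝ) (ha : SVL a) :
    ∃ C : ℝ≥0∞, C ≠ ∞ ∧ ∀ κ : ℝ → ℝ≥0∞, (∀ x y, 0 < x → x ≤ y → κ x ≤ κ y) →
      ∀ s : ℝ, 0 < s → ENNReal.ofReal (s ^ (-σ) * a s) * κ s *
        LqNorm r (Ioo 0 s) (svWgt r (fun s => b s / a s)) ≤ C * RF σ r q b a κ := by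
  obtain ⟨C, hC, h⟩ := inner_block hσ hq ha
  refine ⟨C, hC, fun κ hκ s hs => ?_⟩
  calc _ ≤ _ := le_LqNorm_const_mul hr _ _ _
    _ ≤ LqNorm r (Ioo 0 s) (fun t => C * (ENNReal.ofReal (t ^ (-(r⁻¹.toReal)) * (b t / a t)) *
        LqNorm q (Ioi t) (innF σ q a κ))) := by
        refine LqNorm_mono measurableSet_Ioo fun t ht => ?_
        rw [mul_left_comm, mul_comm]
        refine mul_le_mul_right ?_ _
        exact h κ hκ s (Ioi t) hs fun x hx => ht.2.trans hx.1
    _ = _ := LqNorm_const_mul hr _ hC _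
    _ ≤ _ := by
        gcongr
        exact LqNorm_mono_set (fun x hx => hx.1) _

lemma L_lower {σ : ℝ} (hσ : 0 < σ) {r q : ℝ≥0∞} (hr : 0 < r) (hq : 0 < q) {a b : ℝ → ℝ}
    (ha : SVL a) (hb : SVL b) :
    ∃ C : ℝ≥0∞, C ≠ ∞ ∧ ∀ κ : ℝ → ℝ≥0∞, (∀ x y, 0 < x → x ≤ y → κ x ≤ κ y) →
      ∀ s : ℝ, 0 < s → ENNReal.ofReal (s ^ (-σ) * a s) * κ s *
        LqNorm r (Ioi s) (svWgt r (fun s => b s / a s)) ≤ C * LF σ r q b a κ := by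
  obtain ⟨C, hC, h⟩ := inner_block hσ hq ha
  obtain ⟨D, hD, h2⟩ := tail_growth hr (hb.div ha) one_pos
  refine ⟨D * ENNReal.ofReal 2 * C, by finiteness, fun κ hκ s hs => ?_⟩
  have g := h2 s (2 * s) hs (by linarith)
  rw [Real.rpow_one, mul_div_assoc, div_self hs.ne', mul_one] at g
  calc _ ≤ ENNReal.ofReal (s ^ (-σ) * a s) * κ s * (D * ENNReal.ofReal 2 *
        LqNorm r (Ioi (2 * s)) (svWgt r (fun s => b s / a s))) := by gcongr
    _ = D * ENNReal.ofReal 2 * (ENNReal.ofReal (s ^ (-σ) * a s) * κ s *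
        LqNorm r (Ioi (2 * s)) (svWgt r (fun s => b s / a s))) := by ring
    _ ≤ D * ENNReal.ofReal 2 * (C * LF σ r q b a κ) := by
      refine mul_le_mul_right ?_ _
      calc _ ≤ _ := le_LqNorm_const_mul hr _ _ _
        _ ≤ LqNorm r (Ioi (2 * s)) (fun t => C * (ENNReal.ofReal (t ^ (-(r⁻¹.toReal)) *
            (b t / a t)) * LqNorm q (Ioo 0 t) (innF σ q a κ))) := by
            refine LqNorm_mono measurableSet_Ioi fun t ht => ?_
            rw [mul_left_comm, mul_comm]
            refine mul_le_mul_right ?_ _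
            exact h κ hκ s (Ioo 0 t) hs fun x hx => ⟨hs.trans hx.1, hx.2.trans ht⟩
        _ = _ := LqNorm_const_mul hr _ hC _
        _ ≤ _ := by
            gcongr
            exact LqNorm_mono_set (fun x hx => (by linarith : 0 < 2 * s).trans hx) _
    _ = _ := by ring

lemma inn_pow_eq {σ τ q u s : ℝ} (as : ℝ) (hu : 0 < u) (hs : 0 < s) :
    s ^ (-σ - q) * as * (s / u) ^ τ = u ^ (-τ) * (s ^ (-(σ - τ) - q) * as) := by
  rw [Real.div_rpow hs.le hu.le, Real.rpow_neg hu.le, show -(σ - τ) - q = (-σ - q) + τ by ring,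
    Real.rpow_add hs]
  field_simp

lemma inn_tail {σ τ : ℝ} (hτ : τ < σ) {q : ℝ≥0∞} (hq : 0 < q) {a : ℝ → ℝ} (ha : SVL a) :
    ∃ C : ℝ≥0∞, C ≠ ∞ ∧ ∀ (κ : ℝ → ℝ≥0∞) (u t : ℝ) (m : ℝ≥0∞), m ≠ ∞ → 0 < u → 0 < t →
      (∀ s, t < s → κ s ≤ m * ENNReal.ofReal ((s / u) ^ τ)) →
      LqNorm q (Ioi t) (innF σ q a κ) ≤ C * m * ENNReal.ofReal (t ^ (-σ) * a t * (t / u) ^ τ) := by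
  obtain ⟨C, hC, h⟩ := LqNorm_tail hq (sub_pos.2 hτ) ha
  refine ⟨C, hC, fun κ u t m hm hu ht hκ => ?_⟩
  have as := ha.1 t ht
  calc LqNorm q (Ioi t) (innF σ q a κ) ≤ LqNorm q (Ioi t) (fun s =>
        (m * ENNReal.ofReal (u ^ (-τ))) *
          ENNReal.ofReal (s ^ (-(σ - τ) - q⁻¹.toReal) * a s)) := by
        refine LqNorm_mono measurableSet_Ioi fun s hs => ?_
        have hs0 : 0 < s := ht.trans hs
        have as := ha.1 s hs0
        calc innF σ q a κ s ≤ ENNReal.ofReal (s ^ (-σ - q⁻¹.toReal) * a s) *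
              (m * ENNReal.ofReal ((s / u) ^ τ)) := by
              unfold innF; gcongr; exact hκ s hs
          _ = m * ENNReal.ofReal (s ^ (-σ - q⁻¹.toReal) * a s * (s / u) ^ τ) := by
              rw [ENNReal.ofReal_mul (p := s ^ (-σ - q⁻¹.toReal) * a s) (by positivity)]; ring
          _ = _ := by
              rw [inn_pow_eq _ hu hs0, ENNReal.ofReal_mul (by positivity), mul_assoc]
    _ = _ := LqNorm_const_mul hq _ (by finiteness) _
    _ ≤ _ := mul_le_mul_right (h t ht) _
    _ = _ := by
      have := inn_pow_eq (σ := σ) (τ := τ) (q := 0) (a t) hu ht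
      simp only [sub_zero] at this
      rw [this, ENNReal.ofReal_mul (p := u ^ (-τ)) (by positivity)]; ring

lemma inn_head {σ τ : ℝ} (hτ : σ < τ) {q : ℝ≥0∞} (hq : 0 < q) {a : ℝ → ℝ} (ha : SVL a) :
    ∃ C : ℝ≥0∞, C ≠ ∞ ∧ ∀ (κ : ℝ → ℝ≥0∞) (u t : ℝ) (m : ℝ≥0∞), m ≠ ∞ → 0 < u → 0 < t →
      (∀ s, 0 < s → s < t → κ s ≤ m * ENNReal.ofReal ((s / u) ^ τ)) →
      LqNorm q (Ioo 0 t) (innF σ q a κ) ≤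
        C * m * ENNReal.ofReal (t ^ (-σ) * a t * (t / u) ^ τ) := by
  obtain ⟨C, hC, h⟩ := LqNorm_head hq (sub_pos.2 hτ) ha
  refine ⟨C, hC, fun κ u t m hm hu ht hκ => ?_⟩
  have as := ha.1 t ht
  calc LqNorm q (Ioo 0 t) (innF σ q a κ) ≤ LqNorm q (Ioo 0 t) (fun s =>
        (m * ENNReal.ofReal (u ^ (-τ))) *
          ENNReal.ofReal (s ^ ((τ - σ) - q⁻¹.toReal) * a s)) := by
        refine LqNorm_mono measurableSet_Ioo fun s hs => ?_
        have hs0 : 0 < s := hs.1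
        have as := ha.1 s hs0
        calc innF σ q a κ s ≤ ENNReal.ofReal (s ^ (-σ - q⁻¹.toReal) * a s) *
              (m * ENNReal.ofReal ((s / u) ^ τ)) := by
              unfold innF; gcongr; exact hκ s hs.1 hs.2
          _ = m * ENNReal.ofReal (s ^ (-σ - q⁻¹.toReal) * a s * (s / u) ^ τ) := by
              rw [ENNReal.ofReal_mul (p := s ^ (-σ - q⁻¹.toReal) * a s) (by positivity)]; ring
          _ = _ := by
              rw [inn_pow_eq _ hu hs0, ENNReal.ofReal_mul (by positivity), mul_assoc, neg_sub]
    _ = _ := LqNorm_const_mul hq _ (by finiteness) _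
    _ ≤ _ := mul_le_mul_right (h t ht) _
    _ = _ := by
      have := inn_pow_eq (σ := σ) (τ := τ) (q := 0) (a t) hu ht
      simp only [sub_zero, neg_sub] at this
      rw [this, ENNReal.ofReal_mul (p := u ^ (-τ)) (by positivity)]; ring

lemma R_upper {σ τ : ℝ} (hσ : 0 < σ) (hτ : σ < τ) {r q : ℝ≥0∞} (hr : 0 < r) (hq : 0 < q)
    {a b : ℝ → ℝ} (ha : SVL a) (hb : SVL b) :
    ∃ C : ℝ≥0∞, C ≠ ∞ ∧ ∀ (κ : ℝ → ℝ≥0∞) (u : ℝ) (m : ℝ≥0∞), m ≠ ∞ → 0 < u →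
      (∀ s, 0 < s → s ≤ u → κ s ≤ m * ENNReal.ofReal ((s / u) ^ τ)) →
      (∀ s, u ≤ s → κ s ≤ m) →
      RF σ r q b a κ ≤ C * m * (ENNReal.ofReal (u ^ (-σ) * a u) *
        LqNorm r (Ioo 0 u) (svWgt r (fun s => b s / a s))) := by
  obtain ⟨C₁, hC₁, h1⟩ := LqNorm_split hq
  obtain ⟨C₂, hC₂, h2⟩ := LqNorm_split hr
  obtain ⟨C₃, hC₃, h3⟩ := inn_tail hσ hq ha
  obtain ⟨C₄, hC₄, h4⟩ := inn_head hτ hq ha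
  obtain ⟨C₅, hC₅, h5⟩ := LqNorm_tail hr hσ hb
  obtain ⟨C₆, hC₆, h6⟩ := le_head hr (hb.div ha)
  refine ⟨C₂ * (C₁ * (C₄ + C₃) + C₃ * C₅ * C₆), by finiteness, fun κ u m hm hu k1 k2 => ?_⟩
  have au := ha.1 u hu
  have bu := hb.1 u hu
  have tl : ∀ t, u ≤ t → LqNorm q (Ioi t) (innF σ q a κ) ≤
      C₃ * m * ENNReal.ofReal (t ^ (-σ) * a t) := by
    intro t ht
    have := h3 κ u t m hm hu (hu.trans_le ht) (fun s hs => by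
      simpa using k2 s (ht.trans hs.le))
    simpa using this
  have hd : LqNorm q (Ioo 0 u) (innF σ q a κ) ≤ C₄ * m * ENNReal.ofReal (u ^ (-σ) * a u) := by
    have := h4 κ u u m hm hu hu (fun s hs hsu => k1 s hs hsu.le)
    simpa [div_self hu.ne'] using this
  have all : ∀ t, 0 < t → LqNorm q (Ioi t) (innF σ q a κ) ≤
      C₁ * (C₄ + C₃) * m * ENNReal.ofReal (u ^ (-σ) * a u) := by
    intro t ht
    refine (h1 (Ioi t) (Ioo 0 u) (Ioi u) u _ ?_).trans ?_
    · intro x hx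
      rcases lt_trichotomy x u with h | h | h
      · exact Or.inl (Or.inl ⟨ht.trans hx, h⟩)
      · exact Or.inr h
      · exact Or.inl (Or.inr h)
    · calc _ ≤ C₁ * (C₄ * m * ENNReal.ofReal (u ^ (-σ) * a u) +
            C₃ * m * ENNReal.ofReal (u ^ (-σ) * a u)) := by
            gcongr; exact tl u le_rfl
        _ = _ := by ring
  set Γ := LqNorm r (Ioo 0 u) (svWgt r (fun s => b s / a s)) with hΓ
  have o1 : LqNorm r (Ioo 0 u) (fun t => ENNReal.ofReal (t ^ (-(r⁻¹.toReal)) * (b t / a t)) *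
      LqNorm q (Ioi t) (innF σ q a κ)) ≤
      C₁ * (C₄ + C₃) * m * ENNReal.ofReal (u ^ (-σ) * a u) * Γ := by
    rw [hΓ, ← LqNorm_const_mul hr _ (by finiteness)]
    refine LqNorm_mono measurableSet_Ioo fun t ht => ?_
    rw [mul_comm]
    exact mul_le_mul_left (all t ht.1) _
  have o2 : LqNorm r (Ioi u) (fun t => ENNReal.ofReal (t ^ (-(r⁻¹.toReal)) * (b t / a t)) *
      LqNorm q (Ioi t) (innF σ q a κ)) ≤
      C₃ * m * (C₅ * ENNReal.ofReal (u ^ (-σ) * b u)) := by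
    calc _ ≤ LqNorm r (Ioi u) (fun t => C₃ * m *
            ENNReal.ofReal (t ^ (-σ - r⁻¹.toReal) * b t)) := by
          refine LqNorm_mono measurableSet_Ioi fun t ht => ?_
          have ht0 : 0 < t := hu.trans ht
          have := ha.1 t ht0
          have := hb.1 t ht0
          refine (mul_le_mul_right (tl t (mem_Ioi.1 ht).le) _).trans (le_of_eq ?_)
          rw [mul_left_comm, ← ENNReal.ofReal_mul (by positivity)]
          congr 2
          rw [sub_eq_add_neg, Real.rpow_add ht0]; field_simp
      _ = _ := LqNorm_const_mul hr _ (by finiteness) _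
      _ ≤ _ := mul_le_mul_right (h5 u hu) _
  have o3 : ENNReal.ofReal (u ^ (-σ) * b u) ≤ ENNReal.ofReal (u ^ (-σ) * a u) * (C₆ * Γ) := by
    refine le_trans (le_of_eq ?_) (mul_le_mul_right (h6 u hu) _)
    rw [← ENNReal.ofReal_mul (by positivity)]
    congr 1; field_simp
  refine (h2 (Ioi 0) (Ioo 0 u) (Ioi u) u _ ?_).trans ?_
  · intro x hx
    rcases lt_trichotomy x u with h | h | h
    · exact Or.inl (Or.inl ⟨hx, h⟩)
    · exact Or.inr h
    · exact Or.inl (Or.inr h)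
  calc _ ≤ C₂ * (C₁ * (C₄ + C₃) * m * ENNReal.ofReal (u ^ (-σ) * a u) * Γ +
        C₃ * m * (C₅ * (ENNReal.ofReal (u ^ (-σ) * a u) * (C₆ * Γ)))) := by
        gcongr
        exact o2.trans (by gcongr)
    _ = _ := by ring

lemma L_upper {σ τ : ℝ} (hσ : σ < 1) (hτ : τ < σ) {r q : ℝ≥0∞} (hr : 0 < r) (hq : 0 < q)
    {a b : ℝ → ℝ} (ha : SVL a) (hb : SVL b) :
    ∃ C : ℝ≥0∞, C ≠ ∞ ∧ ∀ (κ : ℝ → ℝ≥0∞) (u : ℝ) (m : ℝ≥0∞), m ≠ ∞ → 0 < u →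
      (∀ s, 0 < s → s ≤ u → κ s ≤ m * ENNReal.ofReal (s / u)) →
      (∀ s, u ≤ s → κ s ≤ m * ENNReal.ofReal ((s / u) ^ τ)) →
      LF σ r q b a κ ≤ C * m * (ENNReal.ofReal (u ^ (-σ) * a u) *
        LqNorm r (Ioi u) (svWgt r (fun s => b s / a s))) := by
  obtain ⟨C₁, hC₁, h1⟩ := LqNorm_split hq
  obtain ⟨C₂, hC₂, h2⟩ := LqNorm_split hr
  obtain ⟨C₃, hC₃, h3⟩ := inn_head hσ hq ha
  obtain ⟨C₄, hC₄, h4⟩ := inn_tail hτ hq ha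
  obtain ⟨C₅, hC₅, h5⟩ := LqNorm_head hr (sub_pos.2 hσ) hb
  obtain ⟨C₆, hC₆, h6⟩ := le_tail hr (hb.div ha)
  refine ⟨C₂ * (C₁ * (C₄ + C₃) + C₃ * C₅ * C₆), by finiteness, fun κ u m hm hu k1 k2 => ?_⟩
  have au := ha.1 u hu
  have bu := hb.1 u hu
  have hd : ∀ t, 0 < t → t ≤ u → LqNorm q (Ioo 0 t) (innF σ q a κ) ≤
      C₃ * m * ENNReal.ofReal (t ^ (-σ) * a t * (t / u)) := by
    intro t ht htu
    have := h3 κ u t m hm hu ht (fun s hs hst => by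
      simpa using k1 s hs (hst.le.trans htu))
    simpa using this
  have hd' : LqNorm q (Ioo 0 u) (innF σ q a κ) ≤ C₃ * m * ENNReal.ofReal (u ^ (-σ) * a u) := by
    simpa [div_self hu.ne'] using hd u hu le_rfl
  have tl : LqNorm q (Ioi u) (innF σ q a κ) ≤ C₄ * m * ENNReal.ofReal (u ^ (-σ) * a u) := by
    have := h4 κ u u m hm hu hu (fun s hs => k2 s hs.le)
    simpa [div_self hu.ne'] using this
  have all : ∀ t, LqNorm q (Ioo 0 t) (innF σ q a κ) ≤
      C₁ * (C₄ + C₃) * m * ENNReal.ofReal (u ^ (-σ) * a u) := by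
    intro t
    refine (h1 (Ioo 0 t) (Ioo 0 u) (Ioi u) u _ ?_).trans ?_
    · intro x hx
      rcases lt_trichotomy x u with h | h | h
      · exact Or.inl (Or.inl ⟨hx.1, h⟩)
      · exact Or.inr h
      · exact Or.inl (Or.inr h)
    · calc _ ≤ C₁ * (C₃ * m * ENNReal.ofReal (u ^ (-σ) * a u) +
            C₄ * m * ENNReal.ofReal (u ^ (-σ) * a u)) := by
            gcongr
        _ = _ := by ring
  set Γ := LqNorm r (Ioi u) (svWgt r (fun s => b s / a s)) with hΓ
  have o1 : LqNorm r (Ioi u) (fun t => ENNReal.ofReal (t ^ (-(r⁻¹.toReal)) * (b t / a t)) *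
      LqNorm q (Ioo 0 t) (innF σ q a κ)) ≤
      C₁ * (C₄ + C₃) * m * ENNReal.ofReal (u ^ (-σ) * a u) * Γ := by
    rw [hΓ, ← LqNorm_const_mul hr _ (by finiteness)]
    refine LqNorm_mono measurableSet_Ioi fun t ht => ?_
    rw [mul_comm]
    exact mul_le_mul_left (all t) _
  have o2 : LqNorm r (Ioo 0 u) (fun t => ENNReal.ofReal (t ^ (-(r⁻¹.toReal)) * (b t / a t)) *
      LqNorm q (Ioo 0 t) (innF σ q a κ)) ≤
      C₃ * m * ENNReal.ofReal u⁻¹ * (C₅ * ENNReal.ofReal (u ^ (1 - σ) * b u)) := by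
    calc _ ≤ LqNorm r (Ioo 0 u) (fun t => C₃ * m * ENNReal.ofReal u⁻¹ *
            ENNReal.ofReal (t ^ (1 - σ - r⁻¹.toReal) * b t)) := by
          refine LqNorm_mono measurableSet_Ioo fun t ht => ?_
          have ht0 : 0 < t := ht.1
          have := ha.1 t ht0
          have := hb.1 t ht0
          refine (mul_le_mul_right (hd t ht0 ht.2.le) _).trans (le_of_eq ?_)
          rw [mul_left_comm, ← ENNReal.ofReal_mul (by positivity), mul_assoc (C₃ * m),
            ← ENNReal.ofReal_mul (by positivity)]
          congr 2
          rw [show 1 - σ - r⁻¹.toReal = 1 + (-σ) + (-r⁻¹.toReal) by ring, Real.rpow_add ht0,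
            Real.rpow_add ht0, Real.rpow_one]; field_simp
      _ = _ := LqNorm_const_mul hr _ (by finiteness) _
      _ ≤ _ := mul_le_mul_right (h5 u hu) _
  have o3 : ENNReal.ofReal u⁻¹ * ENNReal.ofReal (u ^ (1 - σ) * b u) ≤
      ENNReal.ofReal (u ^ (-σ) * a u) * (C₆ * Γ) := by
    refine le_trans (le_of_eq ?_) (mul_le_mul_right (h6 u hu) _)
    rw [← ENNReal.ofReal_mul (by positivity), ← ENNReal.ofReal_mul (by positivity)]
    congr 1
    rw [sub_eq_add_neg, Real.rpow_add hu, Real.rpow_one]; field_simp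
  refine (h2 (Ioi 0) (Ioo 0 u) (Ioi u) u _ ?_).trans ?_
  · intro x hx
    rcases lt_trichotomy x u with h | h | h
    · exact Or.inl (Or.inl ⟨hx, h⟩)
    · exact Or.inr h
    · exact Or.inl (Or.inr h)
  calc _ ≤ C₂ * (C₃ * m * C₅ * (ENNReal.ofReal u⁻¹ * ENNReal.ofReal (u ^ (1 - σ) * b u)) +
        C₁ * (C₄ + C₃) * m * ENNReal.ofReal (u ^ (-σ) * a u) * Γ) := by
        gcongr
        exact o2.trans (le_of_eq (by ring))
    _ ≤ C₂ * (C₃ * m * C₅ * (ENNReal.ofReal (u ^ (-σ) * a u) * (C₆ * Γ)) +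
        C₁ * (C₄ + C₃) * m * ENNReal.ofReal (u ^ (-σ) * a u) * Γ) := by gcongr
    _ = _ := by ring

/-! ### The K-functional -/

lemma Kf_mono (N₀ N₁ : E → ℝ≥0∞) (f : E) {x y : ℝ} (h : x ≤ y) :
    Kf N₀ N₁ x f ≤ Kf N₀ N₁ y f := by
  unfold Kf; gcongr

lemma Kf_scale (N₀ N₁ : E → ℝ≥0∞) (f : E) {x y : ℝ} (hx : 0 < x) (h : x ≤ y) :
    Kf N₀ N₁ y f ≤ ENNReal.ofReal (y / x) * Kf N₀ N₁ x f := by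
  have hy := hx.trans_le h
  unfold Kf
  rw [ENNReal.mul_iInf_of_ne (by simp; positivity) (by simp)]
  gcongr with g
  rw [mul_add]
  refine add_le_add ?_ ?_
  · refine le_mul_of_one_le_left zero_le ?_
    rw [← ENNReal.ofReal_one]
    exact ENNReal.ofReal_le_ofReal (by rwa [one_le_div hx])
  · rw [← mul_assoc, ← ENNReal.ofReal_mul (by positivity), div_mul_cancel₀ _ hx.ne']

lemma Kf_add (A₀ A₁ : QuasiBanach E) : ∃ C : ℝ≥0∞, 1 ≤ C ∧ C ≠ ∞ ∧ ∀ (t : ℝ) (f g : E),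
    Kf A₀.N A₁.N t (f + g) ≤ C * (Kf A₀.N A₁.N t f + Kf A₀.N A₁.N t g) := by
  obtain ⟨C, hC1, hC, h0⟩ := A₀.quasi
  obtain ⟨D, hD1, hD, h1⟩ := A₁.quasi
  refine ⟨C + D, hC1.trans le_self_add, by finiteness, fun t f g => ?_⟩
  have ne0 : C + D ≠ 0 := by
    have : (1 : ℝ≥0∞) ≤ C + D := hC1.trans le_self_add
    exact (lt_of_lt_of_le one_pos this).ne'
  have hfin : C + D ≠ ∞ := by finiteness
  unfold Kf
  rw [ENNReal.iInf_add, ENNReal.mul_iInf_of_ne ne0 hfin]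
  refine le_iInf fun x => ?_
  rw [ENNReal.add_iInf, ENNReal.mul_iInf_of_ne ne0 hfin]
  refine le_iInf fun y => ?_
  refine (iInf_le _ (x + y)).trans ?_
  have e : f + g - (x + y) = (f - x) + (g - y) := by abel
  rw [e]
  calc A₀.N (x + y) + ENNReal.ofReal t * A₁.N ((f - x) + (g - y))
      ≤ C * (A₀.N x + A₀.N y) + ENNReal.ofReal t * (D * (A₁.N (f - x) + A₁.N (g - y))) := by
        gcongr
        exacts [h0 _ _, h1 _ _]
    _ ≤ (C + D) * (A₀.N x + A₀.N y) +
        ENNReal.ofReal t * ((C + D) * (A₁.N (f - x) + A₁.N (g - y))) := by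
        gcongr
        exacts [le_self_add, le_add_self]
    _ = _ := by ring

lemma Kf_le_left (A₀ A₁ : QuasiBanach E) (t : ℝ) (f : E) : Kf A₀.N A₁.N t f ≤ A₀.N f := by
  refine (iInf_le _ f).trans ?_
  simp [A₁.zero]

lemma Kf_le_right (A₀ A₁ : QuasiBanach E) (t : ℝ) (f : E) :
    Kf A₀.N A₁.N t f ≤ ENNReal.ofReal t * A₁.N f := by
  refine (iInf_le _ 0).trans ?_
  simp [A₀.zero]

lemma QuasiBanach.neg (A : QuasiBanach E) (f : E) : A.N (-f) = A.N f := by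
  have := A.smul (-1) f
  simpa using this

lemma pt_lower (A₀ A₁ : QuasiBanach E) {NR NL : E → ℝ≥0∞} {W₀ W₁ : ℝ → ℝ≥0∞} {ρ : ℝ → ℝ}
    (hW : ∀ u, 0 < u → W₀ u = ENNReal.ofReal (ρ u) * W₁ u)
    {C₀ C₁ : ℝ≥0∞} (hC₀ : C₀ ≠ ∞) (hC₁ : C₁ ≠ ∞)
    (h0 : ∀ f u, 0 < u → W₀ u * Kf A₀.N A₁.N u f ≤ C₀ * NR f)
    (h1 : ∀ f u, 0 < u → W₁ u * Kf A₀.N A₁.N u f ≤ C₁ * NL f) :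
    ∃ C : ℝ≥0∞, C ≠ ∞ ∧ ∀ f u, 0 < u →
      W₀ u * Kf A₀.N A₁.N u f ≤ C * Kf NR NL (ρ u) f := by
  obtain ⟨C, hC1, hC, hK⟩ := Kf_add A₀ A₁
  refine ⟨C * (C₀ + C₁ + 1), by finiteness, fun f u hu => ?_⟩
  have hne : C * (C₀ + C₁ + 1) ≠ 0 := by
    refine mul_ne_zero (lt_of_lt_of_le one_pos hC1).ne' (by simp)
  conv_rhs => unfold Kf
  rw [ENNReal.mul_iInf_of_ne hne (by finiteness)]
  refine le_iInf fun g => ?_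
  calc W₀ u * Kf A₀.N A₁.N u f = W₀ u * Kf A₀.N A₁.N u (g + (f - g)) := by
        rw [add_sub_cancel]
    _ ≤ W₀ u * (C * (Kf A₀.N A₁.N u g + Kf A₀.N A₁.N u (f - g))) := by gcongr; exact hK _ _ _
    _ = C * (W₀ u * Kf A₀.N A₁.N u g +
        ENNReal.ofReal (ρ u) * (W₁ u * Kf A₀.N A₁.N u (f - g))) := by
        rw [hW u hu]; ring
    _ ≤ C * (C₀ * NR g + ENNReal.ofReal (ρ u) * (C₁ * NL (f - g))) := by
        exact mul_le_mul_right (add_le_add (h0 _ _ hu) (mul_le_mul_right (h1 _ _ hu) _)) _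
    _ ≤ C * ((C₀ + C₁ + 1) * NR g + ENNReal.ofReal (ρ u) * ((C₀ + C₁ + 1) * NL (f - g))) := by
        gcongr
        · rw [add_assoc]; exact le_self_add
        · rw [add_comm C₀, add_assoc]; exact le_self_add
    _ = _ := by ring

lemma pt_upper (A₀ A₁ : QuasiBanach E) {NR NL : E → ℝ≥0∞} {W₀ W₁ : ℝ → ℝ≥0∞} {ρ : ℝ → ℝ}
    (hW : ∀ u, 0 < u → W₀ u = ENNReal.ofReal (ρ u) * W₁ u)
    {C₀ C₁ : ℝ≥0∞} (hC₀ : C₀ ≠ ∞) (hC₁ : C₁ ≠ ∞) {τ₀ τ₁ : ℝ} (hτ₀ : τ₀ ≤ 1) (hτ₁ : 0 ≤ τ₁)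
    (h0 : ∀ (f : E) (u : ℝ) (m : ℝ≥0∞), m ≠ ∞ → 0 < u →
      (∀ s, 0 < s → s ≤ u → Kf A₀.N A₁.N s f ≤ m * ENNReal.ofReal ((s / u) ^ τ₀)) →
      (∀ s, u ≤ s → Kf A₀.N A₁.N s f ≤ m) → NR f ≤ C₀ * m * W₀ u)
    (h1 : ∀ (f : E) (u : ℝ) (m : ℝ≥0∞), m ≠ ∞ → 0 < u →
      (∀ s, 0 < s → s ≤ u → Kf A₀.N A₁.N s f ≤ m * ENNReal.ofReal (s / u)) →
      (∀ s, u ≤ s → Kf A₀.N A₁.N s f ≤ m * ENNReal.ofReal ((s / u) ^ τ₁)) →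
      NL f ≤ C₁ * m * W₁ u) :
    ∃ C : ℝ≥0∞, C ≠ ∞ ∧ ∀ (f : E) (u : ℝ) (m : ℝ≥0∞), m ≠ ∞ → m ≠ 0 → 0 < u →
      (∀ s, 0 < s → s ≤ u → Kf A₀.N A₁.N s f ≤ m * ENNReal.ofReal ((s / u) ^ τ₀)) →
      (∀ s, u ≤ s → Kf A₀.N A₁.N s f ≤ m * ENNReal.ofReal ((s / u) ^ τ₁)) →
      Kf NR NL (ρ u) f ≤ C * m * W₀ u := by
  obtain ⟨D, hD1, hD, hK⟩ := Kf_add A₀ A₁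
  refine ⟨(C₀ + C₁) * (3 * D), by finiteness, fun f u m hm hm0 hu k0 k1 => ?_⟩
  have lt : Kf A₀.N A₁.N u f < 2 * m := by
    have := k0 u hu le_rfl
    rw [div_self hu.ne', Real.one_rpow, ENNReal.ofReal_one, mul_one] at this
    refine this.trans_lt ?_
    rw [two_mul]
    exact ENNReal.lt_add_right hm hm0
  obtain ⟨g, hg⟩ := iInf_lt_iff.1 lt
  have g0 : A₀.N g ≤ 2 * m := le_self_add.trans hg.le
  have g1 : ENNReal.ofReal u * A₁.N (f - g) ≤ 2 * m := le_add_self.trans hg.le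
  have g1s : ∀ s, 0 < s → ENNReal.ofReal s * A₁.N (f - g) ≤ 2 * m * ENNReal.ofReal (s / u) := by
    intro s hs
    calc ENNReal.ofReal s * A₁.N (f - g)
        = ENNReal.ofReal (s / u) * (ENNReal.ofReal u * A₁.N (f - g)) := by
          rw [← mul_assoc, ← ENNReal.ofReal_mul (by positivity), div_mul_cancel₀ _ hu.ne']
      _ ≤ ENNReal.ofReal (s / u) * (2 * m) := by gcongr
      _ = _ := mul_comm _ _
  have n : (2 : ℝ≥0∞) * m ≤ 3 * D * m := by
    refine mul_le_mul_left ?_ m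
    calc (2 : ℝ≥0∞) ≤ 3 * 1 := by norm_num
      _ ≤ _ := by gcongr
  have gR : NR g ≤ C₀ * (3 * D * m) * W₀ u := by
    refine h0 g u _ (by finiteness) hu (fun s hs hsu => ?_) (fun s hs => ?_)
    · have e : g = f + (g - f) := by abel
      have hle : ENNReal.ofReal (s / u) ≤ ENNReal.ofReal ((s / u) ^ τ₀) := by
        apply ENNReal.ofReal_le_ofReal
        have hs1 : s / u ≤ 1 := by rwa [div_le_one hu]
        have := Real.rpow_le_rpow_of_exponent_ge (by positivity : 0 < s / u) hs1 hτ₀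
        simpa using this
      calc Kf A₀.N A₁.N s g = Kf A₀.N A₁.N s (f + (g - f)) := by rw [← e]
        _ ≤ D * (Kf A₀.N A₁.N s f + Kf A₀.N A₁.N s (g - f)) := hK _ _ _
        _ ≤ D * (m * ENNReal.ofReal ((s / u) ^ τ₀) + 2 * m * ENNReal.ofReal ((s / u) ^ τ₀)) := by
          gcongr
          · exact k0 s hs hsu
          · refine (Kf_le_right A₀ A₁ s _).trans ?_
            rw [← neg_sub f g, A₁.neg]
            exact (g1s s hs).trans (by gcongr)
        _ = _ := by ring
    · exact (Kf_le_left A₀ A₁ s g).trans (g0.trans n)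
  have gL : NL (f - g) ≤ C₁ * (3 * D * m) * W₁ u := by
    refine h1 _ u _ (by finiteness) hu (fun s hs hsu => ?_) (fun s hs => ?_)
    · exact (Kf_le_right A₀ A₁ s _).trans ((g1s s hs).trans (by gcongr))
    · have hs0 := hu.trans_le hs
      have one_le : (1 : ℝ≥0∞) ≤ ENNReal.ofReal ((s / u) ^ τ₁) := by
        rw [← ENNReal.ofReal_one]
        apply ENNReal.ofReal_le_ofReal
        exact Real.one_le_rpow (by rwa [one_le_div hu]) hτ₁
      calc Kf A₀.N A₁.N s (f - g) = Kf A₀.N A₁.N s (f + (-g)) := by rw [sub_eq_add_neg]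
        _ ≤ D * (Kf A₀.N A₁.N s f + Kf A₀.N A₁.N s (-g)) := hK _ _ _
        _ ≤ D * (m * ENNReal.ofReal ((s / u) ^ τ₁) + 2 * m * ENNReal.ofReal ((s / u) ^ τ₁)) := by
          gcongr
          · exact k1 s hs
          · refine (Kf_le_left A₀ A₁ s _).trans ?_
            rw [A₀.neg]
            exact g0.trans (le_mul_of_one_le_right zero_le one_le)
        _ = _ := by ring
  calc Kf NR NL (ρ u) f ≤ NR g + ENNReal.ofReal (ρ u) * NL (f - g) := iInf_le _ g
    _ ≤ C₀ * (3 * D * m) * W₀ u + ENNReal.ofReal (ρ u) * (C₁ * (3 * D * m) * W₁ u) := by gcongr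
    _ = _ := by rw [hW u hu]; ring

/-! ### Discretization -/

/-- The discrete `ℓ_r` quasi-norm over the integers. -/
def dn (r : ℝ≥0∞) (x : ℤ → ℝ≥0∞) : ℝ≥0∞ :=
  if r = ∞ then ⨆ n, x n else (∑' n : ℤ, x n ^ r.toReal) ^ r⁻¹.toReal

lemma dn_top (x : ℤ → ℝ≥0∞) : dn ∞ x = ⨆ n, x n := by simp [dn]

lemma dn_of_ne_top {r : ℝ≥0∞} (hr : r ≠ ∞) (x : ℤ → ℝ≥0∞) :
    dn r x = (∑' n : ℤ, x n ^ r.toReal) ^ r⁻¹.toReal := by simp [dn, hr]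

lemma dn_mono {r : ℝ≥0∞} {x y : ℤ → ℝ≥0∞} (h : ∀ n, x n ≤ y n) : dn r x ≤ dn r y := by
  unfold dn
  split_ifs
  · exact iSup_mono h
  · refine ENNReal.rpow_le_rpow (ENNReal.tsum_le_tsum fun n => ?_) ENNReal.toReal_nonneg
    exact ENNReal.rpow_le_rpow (h n) ENNReal.toReal_nonneg

lemma dn_const_mul {r : ℝ≥0∞} (hr0 : 0 < r) (c : ℝ≥0∞) (x : ℤ → ℝ≥0∞) :
    dn r (fun n => c * x n) = c * dn r x := by
  by_cases hr : r = ∞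
  · subst hr
    rw [dn_top, dn_top, ENNReal.mul_iSup]
  · obtain ⟨h1, h2, h3⟩ := toReal_inv_pos hr0 hr
    rw [dn_of_ne_top hr, dn_of_ne_top hr]
    simp_rw [ENNReal.mul_rpow_of_nonneg _ _ h1.le]
    rw [ENNReal.tsum_mul_left, ENNReal.mul_rpow_of_nonneg _ _ h2.le, ← ENNReal.rpow_mul, h3,
      ENNReal.rpow_one]

lemma Ioi_eq_iUnion : Ioi (0 : ℝ) = ⋃ n : ℤ, Ico ((2 : ℝ) ^ n) (2 ^ (n + 1)) := by
  ext x
  simp only [mem_Ioi, mem_iUnion]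
  constructor
  · intro hx
    exact exists_mem_Ico_zpow hx one_lt_two
  · rintro ⟨n, hn⟩
    exact lt_of_lt_of_le (by positivity) hn.1

lemma zpow_disj : Pairwise (Function.onFun Disjoint
    fun n : ℤ => Ico ((2 : ℝ) ^ n) (2 ^ (n + 1))) := by
  have key : ∀ m n : ℤ, m < n → Disjoint (Ico ((2 : ℝ) ^ m) (2 ^ (m + 1)))
      (Ico ((2 : ℝ) ^ n) (2 ^ (n + 1))) := by
    intro m n h
    refine Set.disjoint_left.2 fun x hx hx' => ?_
    have : (2 : ℝ) ^ (m + 1) ≤ 2 ^ n := zpow_le_zpow_right₀ one_le_two (by omega)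
    exact absurd (hx.2.trans_le (this.trans hx'.1)) (lt_irrefl _)
  intro m n h
  rcases lt_or_gt_of_ne h with h | h
  · exact key m n h
  · exact (key n m h).symm

lemma LqNorm_eq_dn {r : ℝ≥0∞} (hr0 : 0 < r) (g : ℝ → ℝ≥0∞) :
    LqNorm r (Ioi 0) g = dn r (fun n => LqNorm r (Ico ((2 : ℝ) ^ n) (2 ^ (n + 1))) g) := by
  by_cases hr : r = ∞
  · subst hr
    rw [dn_top]
    apply le_antisymm
    · rw [LqNorm_top]
      refine essSup_le_of_ae_le _ ?_
      rw [Ioi_eq_iUnion]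
      refine (ae_restrict_iUnion_iff _ _).2 fun n => ?_
      have := ENNReal.ae_le_essSup (μ := volume.restrict (Ico ((2 : ℝ) ^ n) (2 ^ (n + 1)))) g
      filter_upwards [this] with x hx
      refine hx.trans ?_
      rw [← LqNorm_top]
      exact le_iSup (fun n : ℤ => LqNorm ∞ (Ico ((2 : ℝ) ^ n) (2 ^ (n + 1))) g) n
    · refine iSup_le fun n => LqNorm_mono_set (fun x hx => ?_) g
      exact lt_of_lt_of_le (by positivity) hx.1
  · obtain ⟨h1, h2, h3⟩ := toReal_inv_pos hr0 hr
    rw [dn_of_ne_top hr, LqNorm_of_ne_top hr, Ioi_eq_iUnion,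
      lintegral_iUnion (fun n => measurableSet_Ico) zpow_disj]
    congr 1
    refine tsum_congr fun n => ?_
    rw [LqNorm_of_ne_top hr, ← ENNReal.rpow_mul, mul_comm r⁻¹.toReal, h3, ENNReal.rpow_one]

lemma block_upper {r : ℝ≥0∞} (hr0 : 0 < r) {C : ℝ≥0∞} {H : ℝ → ℝ≥0∞}
    (h : ∀ x y, 0 < x → x ≤ y → y ≤ 2 * x → H x ≤ C * H y ∧ H y ≤ C * H x) {s : ℝ} (hs : 0 < s) :
    LqNorm r (Ico s (2 * s)) (fun u => ENNReal.ofReal (u ^ (-r⁻¹.toReal)) * H u) ≤ C * H s := by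
  have : LqNorm r (Ico s (2 * s)) (fun u => ENNReal.ofReal (u ^ (-r⁻¹.toReal)) * H u) ≤
      LqNorm r (Ico s (2 * s)) (fun _ => ENNReal.ofReal (s ^ (-r⁻¹.toReal)) * (C * H s)) := by
    refine LqNorm_mono measurableSet_Ico fun x hx => ?_
    refine mul_le_mul' (ENNReal.ofReal_le_ofReal ?_) (h s x hs hx.1 hx.2.le).2
    exact Real.rpow_le_rpow_of_nonpos hs hx.1 (by simp)
  refine this.trans ?_
  by_cases hr : r = ∞
  · subst hr
    rw [LqNorm_top]
    refine (essSup_le_of_ae_le _ (Eventually.of_forall fun _ => le_rfl)).trans ?_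
    simp
  · obtain ⟨h1, h2, h3⟩ := toReal_inv_pos hr0 hr
    rw [LqNorm_of_ne_top hr, setLIntegral_const, Real.volume_Ico,
      ENNReal.mul_rpow_of_nonneg _ _ h2.le, ← ENNReal.rpow_mul, h3, ENNReal.rpow_one,
      mul_right_comm, ENNReal.ofReal_rpow_of_pos (by linarith),
      ← ENNReal.ofReal_mul (by positivity), show 2 * s - s = s by ring,
      ← Real.rpow_add hs]
    simp

lemma block_lower {r : ℝ≥0∞} (hr0 : 0 < r) {C : ℝ≥0∞} (hC : C ≠ ∞) {H : ℝ → ℝ≥0∞}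
    (h : ∀ x y, 0 < x → x ≤ y → y ≤ 2 * x → H x ≤ C * H y ∧ H y ≤ C * H x) {s : ℝ} (hs : 0 < s) :
    H s ≤ ENNReal.ofReal (2 ^ r⁻¹.toReal) * C *
      LqNorm r (Ico s (2 * s)) (fun u => ENNReal.ofReal (u ^ (-r⁻¹.toReal)) * H u) := by
  have key := LqNorm_block hr0 hs (M := ENNReal.ofReal ((2 * s) ^ (-r⁻¹.toReal)) * H s)
    (f := fun u => C * (ENNReal.ofReal (u ^ (-r⁻¹.toReal)) * H u)) (S := Ico s (2 * s))
    Ioo_subset_Ico_self (fun x hx => by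
      rw [mul_left_comm]
      refine mul_le_mul' (ENNReal.ofReal_le_ofReal ?_) (h s x hs hx.1.le hx.2.le).1
      exact Real.rpow_le_rpow_of_nonpos (hs.trans hx.1) hx.2.le (by simp))
  rw [LqNorm_const_mul hr0 _ hC] at key
  rw [mul_assoc]
  refine le_trans ?_ (mul_le_mul_right key _)
  rw [← mul_assoc, ← mul_assoc, ← ENNReal.ofReal_mul (by positivity),
    ← ENNReal.ofReal_mul (by positivity), ← Real.mul_rpow (by norm_num) hs.le,
    ← Real.rpow_add (by positivity)]
  simp

lemma LqNorm_dyadic {r : ℝ≥0∞} (hr0 : 0 < r) {C : ℝ≥0∞} (hC : C ≠ ∞) {H : ℝ → ℝ≥0∞}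
    (h : ∀ x y, 0 < x → x ≤ y → y ≤ 2 * x → H x ≤ C * H y ∧ H y ≤ C * H x) :
    LqNorm r (Ioi 0) (fun u => ENNReal.ofReal (u ^ (-r⁻¹.toReal)) * H u) ≤
      C * dn r (fun n => H (2 ^ n)) ∧
    dn r (fun n => H (2 ^ n)) ≤ ENNReal.ofReal (2 ^ r⁻¹.toReal) * C *
      LqNorm r (Ioi 0) (fun u => ENNReal.ofReal (u ^ (-r⁻¹.toReal)) * H u) := by
  have e : ∀ n : ℤ, (2 : ℝ) ^ (n + 1) = 2 * 2 ^ n := fun n => by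
    rw [zpow_add_one₀ (by norm_num), mul_comm]
  rw [LqNorm_eq_dn hr0, ← dn_const_mul hr0, ← dn_const_mul hr0]
  constructor
  · refine dn_mono fun n => ?_
    rw [e]
    exact block_upper hr0 h (by positivity)
  · refine dn_mono fun n => ?_
    rw [e]
    exact block_lower hr0 hC h (by positivity)

lemma dn_reindex {r : ℝ≥0∞} (hr0 : 0 < r) (M : ℕ) (hM : 0 < M) : ∃ C : ℝ≥0∞, C ≠ ∞ ∧
    ∀ (ν : ℤ → ℤ) (Y : ℤ → ℝ≥0∞), (∀ n n', ν n = ν n' → |n - n'| < M) →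
      dn r (fun n => Y (ν n)) ≤ C * dn r Y := by
  by_cases hr : r = ∞
  · subst hr
    refine ⟨1, by simp, fun ν Y _ => ?_⟩
    rw [dn_top, dn_top, one_mul]
    exact iSup_le fun n => le_iSup Y (ν n)
  · obtain ⟨h1, h2, h3⟩ := toReal_inv_pos hr0 hr
    have : NeZero M := ⟨hM.ne'⟩
    refine ⟨(M : ℝ≥0∞) ^ r⁻¹.toReal, ?_, fun ν Y hν => ?_⟩
    · exact ENNReal.rpow_ne_top_of_nonneg h2.le (by simp)
    · rw [dn_of_ne_top hr, dn_of_ne_top hr, ← ENNReal.mul_rpow_of_nonneg _ _ h2.le]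
      refine ENNReal.rpow_le_rpow ?_ h2.le
      have inj : Function.Injective (fun n : ℤ => ((ν n, (n : ZMod M)) : ℤ × ZMod M)) := by
        intro n n' hnn
        simp only [Prod.mk.injEq] at hnn
        have hd : (M : ℤ) ∣ n - n' := by
          rw [← ZMod.intCast_zmod_eq_zero_iff_dvd]
          push_cast
          rw [hnn.2, sub_self]
        have := Int.eq_zero_of_abs_lt_dvd hd (hν _ _ hnn.1)
        linarith
      calc ∑' n : ℤ, Y (ν n) ^ r.toReal
          ≤ ∑' p : ℤ × ZMod M, Y p.1 ^ r.toReal :=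
            ENNReal.tsum_comp_le_tsum_of_injective inj (fun p => Y p.1 ^ r.toReal)
        _ = _ := by
            rw [ENNReal.tsum_prod' , ← ENNReal.tsum_mul_left]
            refine tsum_congr fun k => ?_
            rw [tsum_fintype]
            simp [ZMod.card]

lemma tsum_geom_int {q : ℝ≥0∞} (hq : q < 1) : ∑' k : ℤ, q ^ k.natAbs ≠ ∞ := by
  have inj : Function.Injective (fun n : ℤ => ((n.natAbs, decide (0 ≤ n)) : ℕ × Bool)) := by
    intro n n' h
    simp only [Prod.mk.injEq, decide_eq_decide] at h
    omega
  have := ENNReal.tsum_comp_le_tsum_of_injective inj (fun p => q ^ p.1)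
  refine ne_top_of_le_ne_top ?_ this
  rw [ENNReal.tsum_prod']
  simp only [tsum_fintype, Finset.sum_const, nsmul_eq_mul]
  rw [ENNReal.tsum_mul_left, ENNReal.tsum_geometric]
  refine ENNReal.mul_ne_top (by simp) ?_
  simpa [tsub_eq_zero_iff_le] using hq

lemma dn_sup {r : ℝ≥0∞} (hr0 : 0 < r) {l : ℝ≥0∞} (hl : l < 1) :
    ∃ C : ℝ≥0∞, C ≠ ∞ ∧ ∀ Y : ℤ → ℝ≥0∞,
      dn r (fun k => ⨆ j, l ^ (j - k).natAbs * Y j) ≤ C * dn r Y := by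
  by_cases hr : r = ∞
  · subst hr
    refine ⟨1, by simp, fun Y => ?_⟩
    rw [dn_top, dn_top, one_mul]
    refine iSup_le fun k => iSup_le fun j => ?_
    refine le_trans (mul_le_of_le_one_left zero_le ?_) (le_iSup Y j)
    exact pow_le_one₀ zero_le hl.le
  · obtain ⟨h1, h2, h3⟩ := toReal_inv_pos hr0 hr
    have hS := tsum_geom_int (q := l ^ r.toReal) (ENNReal.rpow_lt_one hl h1)
    refine ⟨(∑' k : ℤ, (l ^ r.toReal) ^ k.natAbs) ^ r⁻¹.toReal,
      ENNReal.rpow_ne_top_of_nonneg h2.le hS, fun Y => ?_⟩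
    rw [dn_of_ne_top hr, dn_of_ne_top hr, ← ENNReal.mul_rpow_of_nonneg _ _ h2.le]
    refine ENNReal.rpow_le_rpow ?_ h2.le
    have step : ∀ k : ℤ, (⨆ j, l ^ (j - k).natAbs * Y j) ^ r.toReal ≤
        ∑' j : ℤ, (l ^ r.toReal) ^ (j - k).natAbs * Y j ^ r.toReal := by
      intro k
      have hle : (⨆ j, l ^ (j - k).natAbs * Y j) ≤
          (∑' j : ℤ, (l ^ r.toReal) ^ (j - k).natAbs * Y j ^ r.toReal) ^ r⁻¹.toReal := by
        refine iSup_le fun j => ?_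
        have e : l ^ (j - k).natAbs * Y j =
            ((l ^ r.toReal) ^ (j - k).natAbs * Y j ^ r.toReal) ^ r⁻¹.toReal := by
          rw [ENNReal.mul_rpow_of_nonneg _ _ h2.le, ← ENNReal.rpow_mul, h3, ENNReal.rpow_one,
            ← ENNReal.rpow_natCast, ← ENNReal.rpow_natCast, ← ENNReal.rpow_mul,
            ← ENNReal.rpow_mul, mul_left_comm, h3, mul_one]
        rw [e]
        exact ENNReal.rpow_le_rpow (ENNReal.le_tsum j) h2.le
      refine (ENNReal.rpow_le_rpow hle h1.le).trans ?_
      rw [← ENNReal.rpow_mul, mul_comm r⁻¹.toReal, h3, ENNReal.rpow_one]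
    refine (ENNReal.tsum_le_tsum step).trans ?_
    rw [ENNReal.tsum_comm, ← ENNReal.tsum_mul_left]
    refine ENNReal.tsum_le_tsum fun j => ?_
    rw [ENNReal.tsum_mul_right]
    refine mul_le_mul_left (le_of_eq ?_) _
    exact (Equiv.subLeft j).tsum_eq (fun k : ℤ => (l ^ r.toReal) ^ k.natAbs)

/-! ### Doubling and index maps -/

lemma rpow_le_of_le {x L β : ℝ} (h1 : 1 ≤ x) (hL : x ≤ L) : x ^ β ≤ L ^ |β| :=
  (Real.rpow_le_rpow_of_exponent_le h1 (le_abs_self β)).trans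
    (Real.rpow_le_rpow (by linarith) hL (abs_nonneg β))

lemma doubling {b : ℝ → ℝ} (hb : SVL b) (γ : ℝ) {L : ℝ} (hL : 1 ≤ L) :
    ∃ C : ℝ≥0∞, C ≠ ∞ ∧ ∀ κ : ℝ → ℝ≥0∞, (∀ x y, 0 < x → x ≤ y → κ x ≤ κ y) →
      (∀ x y, 0 < x → x ≤ y → κ y ≤ ENNReal.ofReal (y / x) * κ x) →
      ∀ x y, 0 < x → x ≤ y → y ≤ L * x →
        ENNReal.ofReal (x ^ γ * b x) * κ x ≤ C * (ENNReal.ofReal (y ^ γ * b y) * κ y) ∧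
        ENNReal.ofReal (y ^ γ * b y) * κ y ≤ C * (ENNReal.ofReal (x ^ γ * b x) * κ x) := by
  obtain ⟨hpos, C, hC, h⟩ := hb.pl γ (ε := 1) one_pos
  have L0 : 0 < L := by linarith
  refine ⟨ENNReal.ofReal (C * L ^ |1 - γ|) + ENNReal.ofReal (C * L ^ |γ + 1| * L), by finiteness,
    fun κ hm hs x y hx hxy hyL => ?_⟩
  have hy := hx.trans_le hxy
  have q1 : 1 ≤ y / x := by rwa [one_le_div hx]
  have q2 : y / x ≤ L := by rwa [div_le_iff₀ hx]
  obtain ⟨h1, h2⟩ := h x y hx hxy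
  have px := hpos x hx
  have py := hpos y hy
  simp only at h1 h2 px py
  have C0 : 0 < C := by linarith
  constructor
  · have r1 : x ^ γ * b x ≤ C * L ^ |1 - γ| * (y ^ γ * b y) := by
      have e : x ^ γ * b x = (y / x) ^ (1 - γ) * ((y / x) ^ (γ - 1) * (x ^ γ * b x)) := by
        rw [← mul_assoc, ← Real.rpow_add (by positivity)]
        simp
      calc x ^ γ * b x = (y / x) ^ (1 - γ) * ((y / x) ^ (γ - 1) * (x ^ γ * b x)) := e
        _ ≤ (y / x) ^ (1 - γ) * (C * (y ^ γ * b y)) := by gcongr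
        _ ≤ L ^ |1 - γ| * (C * (y ^ γ * b y)) := by
          have := rpow_le_of_le (β := 1 - γ) q1 q2
          gcongr
        _ = _ := by ring
    calc ENNReal.ofReal (x ^ γ * b x) * κ x
        ≤ ENNReal.ofReal (C * L ^ |1 - γ| * (y ^ γ * b y)) * κ y :=
          mul_le_mul' (ENNReal.ofReal_le_ofReal r1) (hm x y hx hxy)
      _ = ENNReal.ofReal (C * L ^ |1 - γ|) * (ENNReal.ofReal (y ^ γ * b y) * κ y) := by
          rw [ENNReal.ofReal_mul (by positivity), mul_assoc]
      _ ≤ _ := mul_le_mul_left le_self_add _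
  · have r1 : y ^ γ * b y ≤ C * L ^ |γ + 1| * (x ^ γ * b x) := by
      have := rpow_le_of_le (β := γ + 1) q1 q2
      exact h1.trans (by gcongr)
    calc ENNReal.ofReal (y ^ γ * b y) * κ y
        ≤ ENNReal.ofReal (C * L ^ |γ + 1| * (x ^ γ * b x)) * (ENNReal.ofReal L * κ x) :=
          mul_le_mul' (ENNReal.ofReal_le_ofReal r1) ((hs x y hx hxy).trans
            (mul_le_mul_left (ENNReal.ofReal_le_ofReal q2) _))
      _ = ENNReal.ofReal (C * L ^ |γ + 1| * L) * (ENNReal.ofReal (x ^ γ * b x) * κ x) := by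
          rw [ENNReal.ofReal_mul (p := C * L ^ |γ + 1|) (q := x ^ γ * b x) (by positivity),
            ENNReal.ofReal_mul (p := C * L ^ |γ + 1|) (q := L) (by positivity)]
          ring
      _ ≤ _ := mul_le_mul_left le_add_self _

lemma exists_pow_gt {α : ℝ} (hα : 0 < α) (B : ℝ) : ∃ M : ℕ, 0 < M ∧
    ∀ d : ℤ, (M : ℤ) ≤ d → B < ((2 : ℝ) ^ d) ^ α := by
  have h1 : 1 < (2 : ℝ) ^ α := Real.one_lt_rpow one_lt_two hα
  obtain ⟨M, hM⟩ := pow_unbounded_of_one_lt B h1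
  refine ⟨M + 1, by omega, fun d hd => ?_⟩
  have e : ((2 : ℝ) ^ d) ^ α = ((2 : ℝ) ^ α) ^ d := by
    rw [← Real.rpow_intCast, ← Real.rpow_intCast, ← Real.rpow_mul (by norm_num),
      ← Real.rpow_mul (by norm_num), mul_comm]
  rw [e]
  refine hM.trans_le ?_
  rw [← zpow_natCast]
  exact zpow_le_zpow_right₀ h1.le (by push_cast at hd; omega)

lemma PL.nu {α β : ℝ} {ρ : ℝ → ℝ} (hρ : PL α β ρ) (hα : 0 < α) :
    ∃ (ν : ℤ → ℤ) (M : ℕ), 0 < M ∧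
      (∀ n : ℤ, (2 : ℝ) ^ ν n ≤ ρ (2 ^ n) ∧ ρ (2 ^ n) ≤ 2 * 2 ^ ν n) ∧
      ∀ n n', ν n = ν n' → |n - n'| < M := by
  obtain ⟨hpos, C, hC, h⟩ := hρ
  have ex : ∀ n : ℤ, ∃ k : ℤ, ρ (2 ^ n) ∈ Ico ((2 : ℝ) ^ k) (2 ^ (k + 1)) := fun n =>
    exists_mem_Ico_zpow (hpos _ (by positivity)) one_lt_two
  choose ν hν using ex
  have e : ∀ n : ℤ, (2 : ℝ) ^ (n + 1) = 2 * 2 ^ n := fun n => by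
    rw [zpow_add_one₀ (by norm_num), mul_comm]
  obtain ⟨M, hM0, hM⟩ := exists_pow_gt hα (C * 2)
  have hν2 : ∀ n : ℤ, (2 : ℝ) ^ ν n ≤ ρ (2 ^ n) ∧ ρ (2 ^ n) ≤ 2 * 2 ^ ν n := fun n =>
    ⟨(hν n).1, by rw [← e]; exact (hν n).2.le⟩
  have key : ∀ n n', n ≤ n' → ν n = ν n' → n' - n < M := by
    intro n n' hnn hv
    by_contra! hcon
    have h1 := hM _ hcon
    have h2 := (h (2 ^ n) (2 ^ n') (by positivity) (zpow_le_zpow_right₀ one_le_two hnn)).2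
    rw [← zpow_sub₀ (by norm_num)] at h2
    have p := hpos (2 ^ n) (by positivity)
    have h3 : ρ (2 ^ n') ≤ 2 * ρ (2 ^ n) := by
      refine (hν2 n').2.trans ?_
      rw [← hv]
      linarith [(hν2 n).1]
    have h4 : C * ρ (2 ^ n') ≤ C * (2 * ρ (2 ^ n)) := by gcongr
    have h5 := mul_lt_mul_of_pos_right h1 p
    linarith
  refine ⟨ν, M, hM0, hν2, fun n n' hv => ?_⟩
  rcases le_total n n' with hl | hl
  · rw [abs_sub_comm, abs_of_nonneg (by omega)]
    exact key _ _ hl hv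
  · rw [abs_of_nonneg (by omega)]
    exact key _ _ hl hv.symm

lemma PL.kap {α β : ℝ} {ρ : ℝ → ℝ} (hρ : PL α β ρ) (hα : 0 < α) :
    ∃ (κ : ℤ → ℤ) (M : ℕ) (L : ℝ), 0 < M ∧ 1 ≤ L ∧
      (∀ n : ℤ, ρ (2 ^ κ n) ≤ 2 ^ n ∧ 2 ^ n ≤ L * ρ (2 ^ κ n)) ∧
      ∀ n n', κ n = κ n' → |n - n'| < M := by
  obtain ⟨hpos, C, hC, h⟩ := hρ
  have C0 : 0 < C := by linarith
  have p1 := hpos 1 one_pos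
  have ex : ∀ n : ℤ, ∃ k : ℤ, ρ (2 ^ k) ≤ 2 ^ n ∧ ∀ z : ℤ, ρ (2 ^ z) ≤ 2 ^ n → z ≤ k := by
    intro n
    refine Int.exists_greatest_of_bdd (P := fun k : ℤ => ρ (2 ^ k) ≤ 2 ^ n) ?_ ?_
    · obtain ⟨M, hM0, hM⟩ := exists_pow_gt hα (C * 2 ^ n / ρ 1)
      refine ⟨M, fun z hz => ?_⟩
      by_contra! hcon
      have h1 := hM z hcon.le
      have h2 := (h 1 (2 ^ z) one_pos (one_le_zpow₀ one_le_two (by omega))).2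
      rw [div_one] at h2
      rw [div_lt_iff₀ p1] at h1
      have : C * ρ (2 ^ z) ≤ C * 2 ^ n := by gcongr
      linarith
    · obtain ⟨M, hM0, hM⟩ := exists_pow_gt hα (C * ρ 1 / 2 ^ n)
      refine ⟨-M, ?_⟩
      have h1 := hM M le_rfl
      have hle : (2 : ℝ) ^ (-(M : ℤ)) ≤ 1 := zpow_le_one_of_nonpos₀ one_le_two (by omega)
      have h2 := (h (2 ^ (-(M : ℤ))) 1 (by positivity) hle).2
      rw [one_div, ← zpow_neg, neg_neg] at h2
      rw [div_lt_iff₀ (by positivity)] at h1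
      have h3 := h2.trans h1.le
      exact le_of_mul_le_mul_left h3 (by positivity)
  choose κ hκ hmax using ex
  set L := max 1 (C * 2 ^ β) with hLdef
  have hL1 : 1 ≤ L := le_max_left _ _
  have hκ2 : ∀ n : ℤ, ρ (2 ^ κ n) ≤ 2 ^ n ∧ (2 : ℝ) ^ n ≤ L * ρ (2 ^ κ n) := by
    intro n
    refine ⟨hκ n, ?_⟩
    have h1 : (2 : ℝ) ^ n < ρ (2 ^ (κ n + 1)) := by
      by_contra! hcon
      have := hmax n _ hcon
      omega
    have h2 := (h (2 ^ κ n) (2 ^ (κ n + 1)) (by positivity)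
      (zpow_le_zpow_right₀ one_le_two (by omega))).1
    rw [← zpow_sub₀ (by norm_num), add_sub_cancel_left, zpow_one] at h2
    have p := hpos (2 ^ κ n) (by positivity)
    have : C * 2 ^ β * ρ (2 ^ κ n) ≤ L * ρ (2 ^ κ n) := by
      gcongr
      exact le_max_right _ _
    linarith
  obtain ⟨M, hM0, hM⟩ := exists_pow_gt one_pos L
  have key : ∀ n n', n ≤ n' → κ n = κ n' → n' - n < M := by
    intro n n' hnn hv
    by_contra! hcon
    have h1 := hM _ hcon
    rw [Real.rpow_one, zpow_sub₀ (by norm_num), lt_div_iff₀ (by positivity)] at h1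
    have h2 := (hκ2 n').2
    rw [← hv] at h2
    have h3 : L * ρ (2 ^ κ n) ≤ L * 2 ^ n := by
      gcongr
      exact (hκ2 n).1
    linarith
  refine ⟨κ, M, L, hM0, hL1, hκ2, fun n n' hv => ?_⟩
  rcases le_total n n' with hl | hl
  · rw [abs_sub_comm, abs_of_nonneg (by omega)]
    exact key _ _ hl hv
  · rw [abs_of_nonneg (by omega)]
    exact key _ _ hl hv.symm

/-! ### The pointwise upper estimate on dyadic points -/

lemma upper_pt {ι : Type*} {K Kt : ι → ℝ → ℝ≥0∞} {g : ℝ → ℝ} (hg : SVL g) {η δ : ℝ} (hδ : 0 < δ)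
    (hm : ∀ f x y, 0 < x → x ≤ y → K f x ≤ K f y)
    (hs : ∀ f x y, 0 < x → x ≤ y → K f y ≤ ENNReal.ofReal (y / x) * K f x)
    {W₀ V : ℝ → ℝ≥0∞} {ρ : ℝ → ℝ}
    (hw : ∀ u, 0 < u → V (ρ u) * W₀ u = ENNReal.ofReal (u ^ (-η) * g u))
    {C : ℝ≥0∞} (hC : C ≠ ∞)
    (hPU : ∀ f u m, m ≠ ∞ → m ≠ 0 → 0 < u →
      (∀ s, 0 < s → s ≤ u → K f s ≤ m * ENNReal.ofReal ((s / u) ^ (η - 2 * δ))) →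
      (∀ s, u ≤ s → K f s ≤ m * ENNReal.ofReal ((s / u) ^ (η + 2 * δ))) →
      Kt f (ρ u) ≤ C * m * W₀ u) :
    ∃ C' : ℝ≥0∞, C' ≠ ∞ ∧ ∀ f (k : ℤ), V (ρ (2 ^ k)) * Kt f (ρ (2 ^ k)) ≤
      C' * ⨆ j : ℤ, ENNReal.ofReal (2 ^ (-δ)) ^ (j - k).natAbs *
        (ENNReal.ofReal (((2 : ℝ) ^ j) ^ (-η) * g (2 ^ j)) * K f (2 ^ j)) := by
  obtain ⟨D, hD, hd⟩ := doubling hg (-η) (L := 2) one_le_two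
  obtain ⟨hpos, B, hB, hpl⟩ := hg.pl (-η) hδ
  simp only at hpos hpl
  have B0 : 0 < B := by linarith
  -- comparison of weights
  have wle : ∀ (k j : ℤ) (s : ℝ), (2 : ℝ) ^ j ≤ s → s ≤ 2 * 2 ^ j →
      (s ≤ 2 ^ k → j ≤ k → ((2 : ℝ) ^ k) ^ (-η) * g (2 ^ k) ≤
        B * 2 ^ δ * (s / 2 ^ k) ^ (η - 2 * δ) * ((2 ^ (-δ)) ^ (j - k).natAbs * (s ^ (-η) * g s))) ∧
      (2 ^ k ≤ s → k ≤ j → ((2 : ℝ) ^ k) ^ (-η) * g (2 ^ k) ≤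
        B * 2 ^ δ * (s / 2 ^ k) ^ (η + 2 * δ) *
          ((2 ^ (-δ)) ^ (j - k).natAbs * (s ^ (-η) * g s))) := by
    intro k j s hjs hsj
    have hs0 : 0 < s := lt_of_lt_of_le (by positivity) hjs
    have hk0 : (0 : ℝ) < 2 ^ k := by positivity
    have hj0 : (0 : ℝ) < 2 ^ j := by positivity
    have epow : ∀ n : ℕ, ((2 : ℝ) ^ (-δ)) ^ n = ((2 : ℝ) ^ (n : ℤ)) ^ (-δ) := by
      intro n
      rw [zpow_natCast, ← Real.rpow_natCast, ← Real.rpow_natCast, ← Real.rpow_mul (by norm_num),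
        ← Real.rpow_mul (by norm_num), mul_comm]
    have ps := hpos s hs0
    constructor
    · intro hsk hjk
      have h1 := (hpl s (2 ^ k) hs0 hsk).1
      have e1 : ((j - k).natAbs : ℤ) = k - j := by omega
      rw [epow, e1, zpow_sub₀ (by norm_num)]
      have h2 : (2 * (2 ^ k / s) : ℝ) ^ (-δ) ≤ ((2 : ℝ) ^ k / 2 ^ j) ^ (-δ) := by
        refine Real.rpow_le_rpow_of_nonpos (by positivity) ?_ (by linarith)
        rw [div_le_iff₀ hj0, ← mul_div_assoc, div_mul_eq_mul_div, le_div_iff₀ hs0]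
        nlinarith
      rw [Real.mul_rpow (by norm_num) (by positivity)] at h2
      have e2 : (2 ^ k / s : ℝ) ^ (-η + δ) =
          2 ^ δ * (s / 2 ^ k) ^ (η - 2 * δ) * (2 ^ (-δ) * (2 ^ k / s) ^ (-δ)) := by
        rw [show s / 2 ^ k = (2 ^ k / s)⁻¹ by rw [inv_div], Real.inv_rpow (by positivity),
          ← Real.rpow_neg (by positivity)]
        have : (2 : ℝ) ^ δ * 2 ^ (-δ) = 1 := by
          rw [← Real.rpow_add (by norm_num)]; simp
        have t2 : (2 ^ k / s : ℝ) ^ (-(η - 2 * δ)) * (2 ^ k / s) ^ (-δ) =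
            (2 ^ k / s : ℝ) ^ (-η + δ) := by
          rw [← Real.rpow_add (by positivity)]; congr 1; ring
        rw [← t2]
        linear_combination (-(2 ^ k / s : ℝ) ^ (-(η - 2 * δ)) * (2 ^ k / s) ^ (-δ)) * this
      rw [e2] at h1
      calc _ ≤ _ := h1
        _ ≤ B * (2 ^ δ * (s / 2 ^ k) ^ (η - 2 * δ) * ((2 : ℝ) ^ k / 2 ^ j) ^ (-δ)) *
            (s ^ (-η) * g s) := by gcongr
        _ = _ := by ring
    · intro hsk hjk
      have h1 := (hpl (2 ^ k) s hk0 hsk).2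
      have e1 : ((j - k).natAbs : ℤ) = j - k := by omega
      rw [epow, e1, zpow_sub₀ (by norm_num)]
      have h2 : (s / 2 ^ k : ℝ) ^ (-δ) ≤ ((2 : ℝ) ^ j / 2 ^ k) ^ (-δ) := by
        refine Real.rpow_le_rpow_of_nonpos (by positivity) ?_ (by linarith)
        gcongr
      have one_le : (1 : ℝ) ≤ 2 ^ δ := Real.one_le_rpow one_le_two hδ.le
      have e2 : (s / 2 ^ k : ℝ) ^ (η + 2 * δ) * (s / 2 ^ k : ℝ) ^ (-δ) *
          (s / 2 ^ k : ℝ) ^ (-η - δ) = 1 := by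
        rw [← Real.rpow_add (by positivity), ← Real.rpow_add (by positivity)]
        rw [show η + 2 * δ + -δ + (-η - δ) = 0 by ring, Real.rpow_zero]
      calc ((2 : ℝ) ^ k) ^ (-η) * g (2 ^ k)
          = (s / 2 ^ k : ℝ) ^ (η + 2 * δ) * (s / 2 ^ k : ℝ) ^ (-δ) *
            ((s / 2 ^ k : ℝ) ^ (-η - δ) * (((2 : ℝ) ^ k) ^ (-η) * g (2 ^ k))) := by
            rw [← mul_assoc, e2, one_mul]
        _ ≤ (s / 2 ^ k : ℝ) ^ (η + 2 * δ) * (s / 2 ^ k : ℝ) ^ (-δ) * (B * (s ^ (-η) * g s)) := by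
            gcongr
        _ ≤ 2 ^ δ * ((s / 2 ^ k : ℝ) ^ (η + 2 * δ) * ((2 : ℝ) ^ j / 2 ^ k) ^ (-δ) *
            (B * (s ^ (-η) * g s))) := by
            refine le_trans ?_ (le_mul_of_one_le_left (by positivity) one_le)
            gcongr
        _ = _ := by ring
  set l : ℝ≥0∞ := ENNReal.ofReal (2 ^ (-δ)) with hl
  set C' : ℝ≥0∞ := C * (ENNReal.ofReal (B * 2 ^ δ) * D + 1) + 1 with hC'
  have hC'fin : C' ≠ ∞ := by finiteness
  have hC'0 : C' ≠ 0 := by simp [hC']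
  have main : ∀ f (k : ℤ) (z : ℝ≥0∞), z ≠ 0 → z ≠ ∞ →
      (∀ j : ℤ, l ^ (j - k).natAbs *
        (ENNReal.ofReal (((2 : ℝ) ^ j) ^ (-η) * g (2 ^ j)) * K f (2 ^ j)) ≤ z) →
      V (ρ (2 ^ k)) * Kt f (ρ (2 ^ k)) ≤ C' * z := by
    intro f k z hz0 hz hj
    have hk0 : (0 : ℝ) < 2 ^ k := by positivity
    set wu := ((2 : ℝ) ^ k) ^ (-η) * g (2 ^ k) with hwu
    have wu0 : 0 < wu := hpos _ hk0
    have wE : ENNReal.ofReal wu ≠ 0 := by simpa using wu0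
    set m : ℝ≥0∞ := ENNReal.ofReal (B * 2 ^ δ) * (D * z) + z with hmdef
    have est : ∀ (s τ : ℝ) (j : ℤ), (2 : ℝ) ^ j ≤ s → s ≤ 2 * 2 ^ j →
        wu ≤ B * 2 ^ δ * (s / 2 ^ k) ^ τ * ((2 ^ (-δ)) ^ (j - k).natAbs * (s ^ (-η) * g s)) →
        K f s ≤ ((ENNReal.ofReal wu)⁻¹ * m) * ENNReal.ofReal ((s / 2 ^ k) ^ τ) := by
      intro s τ j hjs hsj hwle
      have hs0 : 0 < s := lt_of_lt_of_le (by positivity) hjs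
      rw [mul_assoc, ← ENNReal.mul_le_iff_le_inv wE (by simp)]
      calc ENNReal.ofReal wu * K f s
          ≤ ENNReal.ofReal (B * 2 ^ δ * (s / 2 ^ k) ^ τ *
            ((2 ^ (-δ)) ^ (j - k).natAbs * (s ^ (-η) * g s))) * K f s := by gcongr
        _ = ENNReal.ofReal (B * 2 ^ δ) * ENNReal.ofReal ((s / 2 ^ k) ^ τ) *
            (l ^ (j - k).natAbs * (ENNReal.ofReal (s ^ (-η) * g s) * K f s)) := by
            rw [ENNReal.ofReal_mul (p := B * 2 ^ δ * (s / 2 ^ k) ^ τ) (by positivity),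
              ENNReal.ofReal_mul (p := B * 2 ^ δ) (by positivity),
              ENNReal.ofReal_mul (p := (2 ^ (-δ)) ^ (j - k).natAbs) (by positivity),
              ENNReal.ofReal_pow (by positivity)]
            ring
        _ ≤ ENNReal.ofReal (B * 2 ^ δ) * ENNReal.ofReal ((s / 2 ^ k) ^ τ) *
            (l ^ (j - k).natAbs *
              (D * (ENNReal.ofReal (((2 : ℝ) ^ j) ^ (-η) * g (2 ^ j)) * K f (2 ^ j)))) := by
            refine mul_le_mul_right (mul_le_mul_right ?_ _) _
            exact (hd (K f) (hm f) (hs f) (2 ^ j) s (by positivity) hjs hsj).2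
        _ = ENNReal.ofReal (B * 2 ^ δ) * ENNReal.ofReal ((s / 2 ^ k) ^ τ) * (D *
            (l ^ (j - k).natAbs *
              (ENNReal.ofReal (((2 : ℝ) ^ j) ^ (-η) * g (2 ^ j)) * K f (2 ^ j)))) := by ring
        _ ≤ ENNReal.ofReal (B * 2 ^ δ) * ENNReal.ofReal ((s / 2 ^ k) ^ τ) * (D * z) :=
            mul_le_mul_right (mul_le_mul_right (hj j) _) _
        _ = ENNReal.ofReal (B * 2 ^ δ) * (D * z) * ENNReal.ofReal ((s / 2 ^ k) ^ τ) := by ring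
        _ ≤ _ := mul_le_mul_left le_self_add _
    have mfin : m ≠ ∞ := by finiteness
    have m0 : m ≠ 0 := by simp [hmdef, hz0]
    have e : ∀ n : ℤ, (2 : ℝ) ^ (n + 1) = 2 * 2 ^ n := fun n => by
      rw [zpow_add_one₀ (by norm_num), mul_comm]
    have fin := hPU f (2 ^ k) ((ENNReal.ofReal wu)⁻¹ * m)
      (ENNReal.mul_ne_top (ENNReal.inv_ne_top.2 wE) mfin)
      (mul_ne_zero (by simp) m0) hk0
      (fun s hs0 hsk => by
        obtain ⟨j, hj1, hj2⟩ := exists_mem_Ico_zpow hs0 (by norm_num : (1 : ℝ) < 2)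
        have hj3 : s ≤ 2 * 2 ^ j := by rw [← e]; exact hj2.le
        have hjk : j ≤ k := (zpow_le_zpow_iff_right₀ (by norm_num : (1 : ℝ) < 2)).1 (hj1.trans hsk)
        exact est s _ j hj1 hj3 ((wle k j s hj1 hj3).1 hsk hjk))
      (fun s hsk => by
        have hs0 : 0 < s := hk0.trans_le hsk
        obtain ⟨j, hj1, hj2⟩ := exists_mem_Ico_zpow hs0 (by norm_num : (1 : ℝ) < 2)
        have hj3 : s ≤ 2 * 2 ^ j := by rw [← e]; exact hj2.le
        have hjk : k < j + 1 := (zpow_lt_zpow_iff_right₀ (by norm_num : (1 : ℝ) < 2)).1 (hsk.trans_lt hj2)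
        exact est s _ j hj1 hj3 ((wle k j s hj1 hj3).2 hsk (by omega)))
    calc V (ρ (2 ^ k)) * Kt f (ρ (2 ^ k))
        ≤ V (ρ (2 ^ k)) * (C * ((ENNReal.ofReal wu)⁻¹ * m) * W₀ (2 ^ k)) :=
          mul_le_mul_right fin _
      _ = C * m * ((ENNReal.ofReal wu)⁻¹ * (V (ρ (2 ^ k)) * W₀ (2 ^ k))) := by ring
      _ = C * m := by
          rw [hw _ hk0, ENNReal.inv_mul_cancel wE (by simp), mul_one]
      _ = C * (ENNReal.ofReal (B * 2 ^ δ) * D + 1) * z := by rw [hmdef]; ring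
      _ ≤ C' * z := mul_le_mul_left le_self_add _
  refine ⟨C', hC'fin, fun f k => ?_⟩
  set Z := ⨆ j : ℤ, l ^ (j - k).natAbs *
        (ENNReal.ofReal (((2 : ℝ) ^ j) ^ (-η) * g (2 ^ j)) * K f (2 ^ j)) with hZ
  by_cases hZt : Z = ∞
  · rw [hZt, ENNReal.mul_top hC'0]; exact le_top
  by_cases hZ0 : Z = 0
  · by_contra! hcon
    set F := V (ρ (2 ^ k)) * Kt f (ρ (2 ^ k))
    obtain ⟨y, hy1, hy2⟩ := exists_between hcon
    rw [hZ0, mul_zero] at hy1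
    have := main f k (y / C') (by simp [hy1.ne', hC'fin]) (ENNReal.div_ne_top hy2.ne_top hC'0)
      (fun j => by
        refine le_trans (le_iSup (fun j : ℤ => l ^ (j - k).natAbs *
          (ENNReal.ofReal (((2 : ℝ) ^ j) ^ (-η) * g (2 ^ j)) * K f (2 ^ j))) j) ?_
        rw [← hZ, hZ0]; exact zero_le)
    rw [ENNReal.mul_div_cancel hC'0 hC'fin] at this
    exact absurd hy2 (not_lt.2 this)
  · exact main f k Z hZ0 hZt (fun j => le_iSup (fun j : ℤ => l ^ (j - k).natAbs *
      (ENNReal.ofReal (((2 : ℝ) ^ j) ^ (-η) * g (2 ^ j)) * K f (2 ^ j))) j)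

/-! ### Combination -/

lemma combine {ι : Type*} {K Kt : ι → ℝ → ℝ≥0∞}
    (hm : ∀ f x y, 0 < x → x ≤ y → K f x ≤ K f y)
    (hs : ∀ f x y, 0 < x → x ≤ y → K f y ≤ ENNReal.ofReal (y / x) * K f x)
    (hmt : ∀ f x y, 0 < x → x ≤ y → Kt f x ≤ Kt f y)
    (hst : ∀ f x y, 0 < x → x ≤ y → Kt f y ≤ ENNReal.ofReal (y / x) * Kt f x)
    {α β : ℝ} {ρ : ℝ → ℝ} (hρ : PL α β ρ) (hα : 0 < α) {r : ℝ≥0∞} (hr : 0 < r)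
    {a g : ℝ → ℝ} (ha : SVL a) (hg : SVL g) (θ η : ℝ)
    {C₁ C₂ l : ℝ≥0∞} (hC₁ : C₁ ≠ ∞) (hC₂ : C₂ ≠ ∞) (hl : l < 1)
    (lower : ∀ f u, 0 < u → ENNReal.ofReal (u ^ (-η) * g u) * K f u ≤
      C₁ * (ENNReal.ofReal (ρ u ^ (-θ) * a (ρ u)) * Kt f (ρ u)))
    (upper : ∀ f (k : ℤ), ENNReal.ofReal (ρ (2 ^ k) ^ (-θ) * a (ρ (2 ^ k))) * Kt f (ρ (2 ^ k)) ≤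
      C₂ * ⨆ j : ℤ, l ^ (j - k).natAbs *
        (ENNReal.ofReal (((2 : ℝ) ^ j) ^ (-η) * g (2 ^ j)) * K f (2 ^ j))) :
    ∃ C : ℝ≥0∞, C ≠ ∞ ∧ ∀ f,
      LqNorm r (Ioi 0) (fun u => ENNReal.ofReal (u ^ (-r⁻¹.toReal)) *
        (ENNReal.ofReal (u ^ (-η) * g u) * K f u)) ≤
      C * LqNorm r (Ioi 0) (fun u => ENNReal.ofReal (u ^ (-r⁻¹.toReal)) *
        (ENNReal.ofReal (u ^ (-θ) * a u) * Kt f u)) ∧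
      LqNorm r (Ioi 0) (fun u => ENNReal.ofReal (u ^ (-r⁻¹.toReal)) *
        (ENNReal.ofReal (u ^ (-θ) * a u) * Kt f u)) ≤
      C * LqNorm r (Ioi 0) (fun u => ENNReal.ofReal (u ^ (-r⁻¹.toReal)) *
        (ENNReal.ofReal (u ^ (-η) * g u) * K f u)) := by
  obtain ⟨DG, hDG, dG⟩ := doubling hg (-η) (L := 2) one_le_two
  obtain ⟨DF, hDF, dF⟩ := doubling ha (-θ) (L := 2) one_le_two
  obtain ⟨ν, M, hM, hν, hνi⟩ := hρ.nu hα
  obtain ⟨κ, M', L, hM', hL, hκ, hκi⟩ := hρ.kap hα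
  obtain ⟨DL, hDL, dL⟩ := doubling ha (-θ) hL
  obtain ⟨R₁, hR₁, re₁⟩ := dn_reindex hr M hM
  obtain ⟨R₂, hR₂, re₂⟩ := dn_reindex hr M' hM'
  obtain ⟨S, hS, sup⟩ := dn_sup hr hl
  set P := ENNReal.ofReal (2 ^ r⁻¹.toReal) with hP
  have hPfin : P ≠ ∞ := by simp [hP]
  refine ⟨DG * (C₁ * DF * (R₁ * (P * DF))) + DF * (DL * C₂ * (R₂ * (S * (P * DG)))),
    by finiteness, fun f => ?_⟩
  set G : ℝ → ℝ≥0∞ := fun u => ENNReal.ofReal (u ^ (-η) * g u) * K f u with hGdef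
  set F : ℝ → ℝ≥0∞ := fun u => ENNReal.ofReal (u ^ (-θ) * a u) * Kt f u with hFdef
  obtain ⟨g1, g2⟩ := LqNorm_dyadic hr hDG (H := G) (dG (K f) (hm f) (hs f))
  obtain ⟨f1, f2⟩ := LqNorm_dyadic hr hDF (H := F) (dF (Kt f) (hmt f) (hst f))
  have ρpos := hρ.1
  constructor
  · refine le_trans ?_ (mul_le_mul_left le_self_add _)
    have st : ∀ n : ℤ, G (2 ^ n) ≤ C₁ * DF * F (2 ^ ν n) := by
      intro n
      refine (lower f (2 ^ n) (by positivity)).trans ?_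
      rw [mul_assoc]
      refine mul_le_mul_right ?_ _
      exact (dF (Kt f) (hmt f) (hst f) (2 ^ ν n) (ρ (2 ^ n)) (by positivity) (hν n).1 (hν n).2).2
    calc _ ≤ _ := g1
      _ ≤ DG * dn r (fun n => C₁ * DF * F (2 ^ ν n)) := mul_le_mul_right (dn_mono st) _
      _ = DG * (C₁ * DF * dn r (fun n => F (2 ^ ν n))) := by rw [dn_const_mul hr]
      _ ≤ DG * (C₁ * DF * (R₁ * dn r (fun n => F (2 ^ n)))) :=
          mul_le_mul_right (mul_le_mul_right (re₁ ν (fun n => F (2 ^ n)) hνi) _) _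
      _ ≤ DG * (C₁ * DF * (R₁ * (P * DF * _))) :=
          mul_le_mul_right (mul_le_mul_right (mul_le_mul_right f2 _) _) _
      _ = _ := by ring
  · refine le_trans ?_ (mul_le_mul_left le_add_self _)
    set Z : ℤ → ℝ≥0∞ := fun k => ⨆ j : ℤ, l ^ (j - k).natAbs * G (2 ^ j) with hZ
    have st : ∀ n : ℤ, F (2 ^ n) ≤ DL * C₂ * Z (κ n) := by
      intro n
      refine (dL (Kt f) (hmt f) (hst f) (ρ (2 ^ κ n)) (2 ^ n) (ρpos _ (by positivity))
        (hκ n).1 (hκ n).2).2.trans ?_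
      rw [mul_assoc]
      exact mul_le_mul_right (upper f (κ n)) _
    calc _ ≤ _ := f1
      _ ≤ DF * dn r (fun n => DL * C₂ * Z (κ n)) := mul_le_mul_right (dn_mono st) _
      _ = DF * (DL * C₂ * dn r (fun n => Z (κ n))) := by rw [dn_const_mul hr]
      _ ≤ DF * (DL * C₂ * (R₂ * dn r Z)) :=
          mul_le_mul_right (mul_le_mul_right (re₂ κ Z hκi) _) _
      _ ≤ DF * (DL * C₂ * (R₂ * (S * dn r (fun n => G (2 ^ n))))) :=
          mul_le_mul_right (mul_le_mul_right (mul_le_mul_right (sup (fun n => G (2 ^ n))) _) _) _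
      _ ≤ DF * (DL * C₂ * (R₂ * (S * (P * DG * _)))) :=
          mul_le_mul_right (mul_le_mul_right (mul_le_mul_right (mul_le_mul_right g2 _) _) _) _
      _ = _ := by ring

lemma normK_eq (N₀ N₁ : E → ℝ≥0∞) (θ : ℝ) (q : ℝ≥0∞) (b : ℝ → ℝ) (f : E) :
    normK N₀ N₁ θ q b f = LqNorm q (Ioi 0) (fun u => ENNReal.ofReal (u ^ (-q⁻¹.toReal)) *
      (ENNReal.ofReal (u ^ (-θ) * b u) * Kf N₀ N₁ u f)) := by
  unfold normK
  refine LqNorm_congr measurableSet_Ioi fun u hu => ?_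
  have hu' : 0 < u := hu
  rw [← mul_assoc, ← ENNReal.ofReal_mul (by positivity), ← mul_assoc, ← Real.rpow_add hu']
  congr 4
  ring

lemma weight_eq {s θ₀ θ₁ θ x y : ℝ} (hs : 0 < s) (hx : 0 < x) (hy : 0 < y) (v : ℝ) :
    s ^ (-((1 - θ) * θ₀ + θ * θ₁)) * (x ^ (1 - θ) * y ^ θ * v) =
      (s ^ (θ₁ - θ₀) * (x / y)) ^ (-θ) * v * (s ^ (-θ₀) * x) := by
  rw [Real.mul_rpow (by positivity) (by positivity), ← Real.rpow_mul hs.le,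
    Real.div_rpow hx.le hy.le, Real.rpow_neg hy.le, div_inv_eq_mul]
  have e1 : s ^ (-((1 - θ) * θ₀ + θ * θ₁)) = s ^ ((θ₁ - θ₀) * -θ) * s ^ (-θ₀) := by
    rw [← Real.rpow_add hs]; congr 1; ring
  have e2 : x ^ (1 - θ) = x ^ (-θ) * x := by
    rw [sub_eq_add_neg, add_comm, Real.rpow_add hx, Real.rpow_one]
  rw [e1, e2]
  ring

theorem theorem28
    (A₀ A₁ : QuasiBanach E)
    (hne : ∃ x : E, x ≠ 0 ∧ A₀.N x ≠ ∞ ∧ A₁.N x ≠ ∞)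
    (θ₀ θ₁ θ : ℝ) (hθ₀ : 0 < θ₀) (hθ₀₁ : θ₀ < θ₁) (hθ₁ : θ₁ < 1) (hθ : 0 < θ) (hθ' : θ < 1)
    (r r₀ r₁ q₀ q₁ : ℝ≥0∞) (hr : 0 < r) (hr₀ : 0 < r₀) (hr₁ : 0 < r₁) (hq₀ : 0 < q₀) (hq₁ : 0 < q₁)
    (a a₀ a₁ b₀ b₁ : ℝ → ℝ)
    (h_sv_a : SlowlyVarying a)
    (h_sv_a₀ : SlowlyVarying a₀)
    (h_sv_a₁ : SlowlyVarying a₁)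
    (h_sv_b₀ : SlowlyVarying b₀)
    (h_sv_b₁ : SlowlyVarying b₁)
    (hfin₀ : LqNorm r₀ (Ioo 0 1) (svWgt r₀ (fun s => b₀ s / a₀ s)) ≠ ∞)
    (hfin₁ : LqNorm r₁ (Ioi 1) (svWgt r₁ (fun s => b₁ s / a₁ s)) ≠ ∞)
    (c₀ c₁ ρ : ℝ → ℝ)
    (hc₀ : ∀ t, c₀ t = a₀ t * (LqNorm r₀ (Ioo 0 t) (svWgt r₀ (fun s => b₀ s / a₀ s))).toReal)
    (hc₁ : ∀ t, c₁ t = a₁ t * (LqNorm r₁ (Ioi t) (svWgt r₁ (fun s => b₁ s / a₁ s))).toReal)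
    (hρ : ∀ t, ρ t = t ^ (θ₁ - θ₀) * (c₀ t / c₁ t)) :
    EquivNorms
      (normK (normR A₀.N A₁.N θ₀ r₀ q₀ b₀ a₀) (normL A₀.N A₁.N θ₁ r₁ q₁ b₁ a₁) θ r a)
      (normK A₀.N A₁.N ((1 - θ) * θ₀ + θ * θ₁) r
        (fun t => c₀ t ^ (1 - θ) * c₁ t ^ θ * a (ρ t))) := by
  have sa := h_sv_a.svl
  have sa₀ := h_sv_a₀.svl
  have sa₁ := h_sv_a₁.svl
  have sb₀ := h_sv_b₀.svl
  have sb₁ := h_sv_b₁.svl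
  have sc₀ : SVL c₀ := by
    rw [funext hc₀]
    exact sa₀.mul (svl_head hr₀ (sb₀.div sa₀) hfin₀)
  have sc₁ : SVL c₁ := by
    rw [funext hc₁]
    exact sa₁.mul (svl_tail hr₁ (sb₁.div sa₁) hfin₁)
  have hgap : 0 < (θ₁ - θ₀) / 2 := by linarith
  have plρ : PL ((θ₁ - θ₀) - (θ₁ - θ₀) / 2) ((θ₁ - θ₀) + (θ₁ - θ₀) / 2) ρ := by
    rw [funext hρ]
    exact (sc₀.div sc₁).pl (θ₁ - θ₀) hgap
  have hα : 0 < (θ₁ - θ₀) - (θ₁ - θ₀) / 2 := by linarith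
  have hβ : 0 < (θ₁ - θ₀) + (θ₁ - θ₀) / 2 := by linarith
  have sg : SVL (fun t => c₀ t ^ (1 - θ) * c₁ t ^ θ * a (ρ t)) :=
    ((sc₀.rpow (by linarith)).mul (sc₁.rpow hθ)).mul (sa.comp_pl plρ hα hβ)
  set η := (1 - θ) * θ₀ + θ * θ₁ with hη
  set g : ℝ → ℝ := fun t => c₀ t ^ (1 - θ) * c₁ t ^ θ * a (ρ t) with hg
  have hη0 : θ₀ < η := by rw [hη]; nlinarith
  have hη1 : η < θ₁ := by rw [hη]; nlinarith
  obtain ⟨δ, hδ, hδ0, hδ1⟩ : ∃ δ : ℝ, 0 < δ ∧ θ₀ < η - 2 * δ ∧ η + 2 * δ < θ₁ := by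
    have m1 := min_le_left (η - θ₀) (θ₁ - η)
    have m2 := min_le_right (η - θ₀) (θ₁ - η)
    have m3 : 0 < min (η - θ₀) (θ₁ - η) := lt_min (by linarith) (by linarith)
    exact ⟨min (η - θ₀) (θ₁ - η) / 4, by linarith, by linarith, by linarith⟩
  set NR := normR A₀.N A₁.N θ₀ r₀ q₀ b₀ a₀ with hNR
  set NL := normL A₀.N A₁.N θ₁ r₁ q₁ b₁ a₁ with hNL
  set W₀ : ℝ → ℝ≥0∞ := fun u => ENNReal.ofReal (u ^ (-θ₀) * c₀ u) with hW₀
  set W₁ : ℝ → ℝ≥0∞ := fun u => ENNReal.ofReal (u ^ (-θ₁) * c₁ u) with hW₁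
  have eW₀ : ∀ u, 0 < u → ENNReal.ofReal (u ^ (-θ₀) * a₀ u) *
      LqNorm r₀ (Ioo 0 u) (svWgt r₀ (fun s => b₀ s / a₀ s)) = W₀ u := by
    intro u hu
    have hf := head_ne_top hr₀ (sb₀.div sa₀) hfin₀ hu
    have p := sa₀.1 u hu
    simp only [hW₀]
    rw [hc₀, ← mul_assoc, ENNReal.ofReal_mul (q := ENNReal.toReal _) (by positivity),
      ENNReal.ofReal_toReal hf]
  have eW₁ : ∀ u, 0 < u → ENNReal.ofReal (u ^ (-θ₁) * a₁ u) *
      LqNorm r₁ (Ioi u) (svWgt r₁ (fun s => b₁ s / a₁ s)) = W₁ u := by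
    intro u hu
    have hf := tail_ne_top hr₁ (sb₁.div sa₁) hfin₁ hu
    have p := sa₁.1 u hu
    simp only [hW₁]
    rw [hc₁, ← mul_assoc, ENNReal.ofReal_mul (q := ENNReal.toReal _) (by positivity),
      ENNReal.ofReal_toReal hf]
  have hW : ∀ u, 0 < u → W₀ u = ENNReal.ofReal (ρ u) * W₁ u := by
    intro u hu
    have p0 := sc₀.1 u hu
    have p1 := sc₁.1 u hu
    have pρ := plρ.1 u hu
    simp only [hW₀, hW₁]
    rw [← ENNReal.ofReal_mul pρ.le, hρ]
    congr 1
    have : u ^ (-θ₀) = u ^ (θ₁ - θ₀) * u ^ (-θ₁) := by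
      rw [← Real.rpow_add hu]; congr 1; ring
    rw [this]
    field_simp
  have Km : ∀ (f : E) (x y : ℝ), 0 < x → x ≤ y → Kf A₀.N A₁.N x f ≤ Kf A₀.N A₁.N y f :=
    fun f x y _ h => Kf_mono _ _ f h
  have Ks : ∀ (f : E) (x y : ℝ), 0 < x → x ≤ y →
      Kf A₀.N A₁.N y f ≤ ENNReal.ofReal (y / x) * Kf A₀.N A₁.N x f :=
    fun f x y hx h => Kf_scale _ _ f hx h
  have Ktm : ∀ (f : E) (x y : ℝ), 0 < x → x ≤ y → Kf NR NL x f ≤ Kf NR NL y f :=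
    fun f x y _ h => Kf_mono _ _ f h
  have Kts : ∀ (f : E) (x y : ℝ), 0 < x → x ≤ y →
      Kf NR NL y f ≤ ENNReal.ofReal (y / x) * Kf NR NL x f :=
    fun f x y hx h => Kf_scale _ _ f hx h
  have hw : ∀ u, 0 < u → ENNReal.ofReal (ρ u ^ (-θ) * a (ρ u)) * W₀ u =
      ENNReal.ofReal (u ^ (-η) * g u) := by
    intro u hu
    have p0 := sc₀.1 u hu
    have p1 := sc₁.1 u hu
    have pρ := plρ.1 u hu
    have pa := sa.1 _ pρ
    simp only [hW₀]
    rw [← ENNReal.ofReal_mul (by positivity), hη]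
    simp only [hg]
    rw [weight_eq hu p0 p1, ← hρ]
  -- the lower estimate
  obtain ⟨B₀, hB₀, l0⟩ := R_lower hθ₀ hr₀ hq₀ b₀ sa₀
  obtain ⟨B₁, hB₁, l1⟩ := L_lower (hθ₀.trans hθ₀₁) hr₁ hq₁ sa₁ sb₁
  obtain ⟨C₁, hC₁, low⟩ := pt_lower A₀ A₁ (NR := NR) (NL := NL) hW hB₀ hB₁
    (fun f u hu => by
      have := l0 (fun u => Kf A₀.N A₁.N u f) (Km f) u hu
      rw [mul_right_comm, eW₀ u hu] at this
      exact this)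
    (fun f u hu => by
      have := l1 (fun u => Kf A₀.N A₁.N u f) (Km f) u hu
      rw [mul_right_comm, eW₁ u hu] at this
      exact this)
  have lower : ∀ (f : E) u, 0 < u → ENNReal.ofReal (u ^ (-η) * g u) * Kf A₀.N A₁.N u f ≤
      C₁ * (ENNReal.ofReal (ρ u ^ (-θ) * a (ρ u)) * Kf NR NL (ρ u) f) := by
    intro f u hu
    rw [← hw u hu, mul_assoc, mul_left_comm C₁]
    exact mul_le_mul_right (low f u hu) _
  -- the upper estimate
  obtain ⟨D₀, hD₀, u0⟩ := R_upper hθ₀ hδ0 hr₀ hq₀ sa₀ sb₀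
  obtain ⟨D₁, hD₁, u1⟩ := L_upper hθ₁ hδ1 hr₁ hq₁ sa₁ sb₁
  obtain ⟨C₂, hC₂, up⟩ := pt_upper A₀ A₁ (NR := NR) (NL := NL) hW hD₀ hD₁
    (τ₀ := η - 2 * δ) (τ₁ := η + 2 * δ) (by linarith) (by linarith)
    (fun f u m hm hu k0 k1 => by
      have := u0 (fun u => Kf A₀.N A₁.N u f) u m hm hu k0 k1
      rw [eW₀ u hu] at this
      exact this)
    (fun f u m hm hu k0 k1 => by
      have := u1 (fun u => Kf A₀.N A₁.N u f) u m hm hu k0 k1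
      rw [eW₁ u hu] at this
      exact this)
  obtain ⟨C₃, hC₃, upper⟩ := upper_pt (K := fun f u => Kf A₀.N A₁.N u f)
    (Kt := fun f u => Kf NR NL u f) (V := fun t => ENNReal.ofReal (t ^ (-θ) * a t)) sg hδ Km Ks
    hw hC₂ up
  have hl : ENNReal.ofReal ((2 : ℝ) ^ (-δ)) < 1 := by
    rw [← ENNReal.ofReal_one]
    refine (ENNReal.ofReal_lt_ofReal_iff one_pos).2 ?_
    exact Real.rpow_lt_one_of_one_lt_of_neg (by norm_num) (by linarith)
  obtain ⟨C, hC, fin⟩ := combine Km Ks Ktm Kts plρ hα hr sa sg θ η hC₁ hC₃ hl lower upper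
  refine ⟨C + 1, by simp, by finiteness, fun f => ?_⟩
  rw [normK_eq, normK_eq]
  obtain ⟨i1, i2⟩ := fin f
  constructor
  · rw [mul_comm, ← div_eq_mul_inv]
    refine ENNReal.div_le_of_le_mul' ?_
    exact i1.trans (mul_le_mul_left le_self_add _)
  · exact i2.trans (mul_le_mul_left le_self_add _)

end
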